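/- Let Ω ⊂ X be an open set, and suppose that u_i → u in L^1_loc(Ω) and ‖Du_i‖(Ω) → ‖Du‖(Ω), with ‖Du‖(Ω) < ∞ and ‖Du_i‖(Ω) < ∞ for all i ∈ ℕ. Then for every ε > 0 there exists δ > 0 such that if A ⊂ Ω with capa_1(A) < δ, then ‖Du_i‖(A) < ε for all i ∈ ℕ. (In other words, the variation measures ‖Du_i‖ are uniformly absolutely continuous with respect to the 1-capacity.) -/

import Mathlib

open MeasureTheory Filter Metric Set
open scoped Topology ENNReal NNReal symmDiff

noncomputable section

namespace PaperBV

/-- A rectifiable curve parametrized by arc-length: a `1`-Lipschitz map on `[0, len]`. -/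
structure Curve (X : Type*) [MetricSpace X] where
  len : ℝ
  len_nonneg : 0 ≤ len
  toFun : ℝ → X
  lip : LipschitzOnWith 1 toFun (Set.Icc 0 len)

variable {X : Type*} [MetricSpace X] [MeasurableSpace X] [BorelSpace X]

/-- The curve lies in the set `A`. -/
def Curve.In (γ : Curve X) (A : Set X) : Prop :=
  ∀ t ∈ Set.Icc (0 : ℝ) γ.len, γ.toFun t ∈ A

/-- The curve integral `∫_γ g ds` of a nonnegative function, for an
arc-length parametrized curve. -/
def Curve.integral (γ : Curve X) (g : X → ℝ≥0∞) : ℝ≥0∞ :=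
  ∫⁻ t in Set.Icc (0 : ℝ) γ.len, g (γ.toFun t)

/-- The upper gradient inequality `|u(x) - u(y)| ≤ ∫_γ g ds` along the curve `γ`,
where `x, y` are the endpoints of `γ`. -/
def UGIneq (u : X → ℝ) (g : X → ℝ≥0∞) (γ : Curve X) : Prop :=
  ENNReal.ofReal |u (γ.toFun 0) - u (γ.toFun γ.len)| ≤ γ.integral g

/-- `g` is an upper gradient of `u` on `X`: `g` is nonnegative (automatic in `ℝ≥0∞`),
Borel, and the upper gradient inequality holds along every curve. -/
def IsUpperGradient (u : X → ℝ) (g : X → ℝ≥0∞) : Prop :=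
  Measurable g ∧ ∀ γ : Curve X, UGIneq u g γ

/-- A family of curves has zero `1`-modulus: there is a nonnegative Borel function
`ρ ∈ L¹(X)` whose curve integral is infinite along every curve of the family. -/
def ZeroMod (μ : Measure X) (Γ : Set (Curve X)) : Prop :=
  ∃ ρ : X → ℝ≥0∞, Measurable ρ ∧ (∫⁻ x, ρ x ∂μ) < ∞ ∧ ∀ γ ∈ Γ, γ.integral ρ = ∞

/-- `g` is a `1`-weak upper gradient of `u` in `A`: `g` is nonnegative, `μ`-measurable,
and the upper gradient inequality holds along `1`-a.e. curve in `A`. -/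
def IsWeakUpperGradientOn (μ : Measure X) (u : X → ℝ) (g : X → ℝ≥0∞) (A : Set X) : Prop :=
  AEMeasurable g μ ∧ ZeroMod μ {γ : Curve X | γ.In A ∧ ¬ UGIneq u g γ}

/-- A nonnegative function `g` belongs to `L¹_loc(A)`. -/
def LIntegrableLocOn (μ : Measure X) (g : X → ℝ≥0∞) (A : Set X) : Prop :=
  ∀ x ∈ A, ∃ r > (0 : ℝ), (∫⁻ y in A ∩ Metric.ball x r, g y ∂μ) < ∞

/-- `g` is the minimal `1`-weak upper gradient of `u` in `A`: a `1`-weak upper gradient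
satisfying `g ≤ g'` `μ`-a.e. in `A` for every `1`-weak upper gradient `g' ∈ L¹_loc(A)`. -/
def IsMinimalWUG (μ : Measure X) (u : X → ℝ) (g : X → ℝ≥0∞) (A : Set X) : Prop :=
  IsWeakUpperGradientOn μ u g A ∧
    ∀ g' : X → ℝ≥0∞, IsWeakUpperGradientOn μ u g' A → LIntegrableLocOn μ g' A →
      ∀ᵐ x ∂(μ.restrict A), g x ≤ g' x

/-- The Newtonian norm `‖u‖_{N^{1,1}(A)}` (valued in `ℝ≥0∞`). -/
def NNorm (μ : Measure X) (A : Set X) (u : X → ℝ) : ℝ≥0∞ :=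
  (∫⁻ x in A, ENNReal.ofReal |u x| ∂μ) +
    ⨅ (g : X → ℝ≥0∞) (_ : IsWeakUpperGradientOn μ u g A), ∫⁻ x in A, g x ∂μ

/-- `u ∈ N^{1,1}(A)`. -/
def MemN11 (μ : Measure X) (A : Set X) (u : X → ℝ) : Prop :=
  NNorm μ A u < ∞

/-- `u ∈ N^{1,1}_loc(A)`: every point of `A` has a ball `B` with `u ∈ N^{1,1}(A ∩ B)`. -/
def MemN11Loc (μ : Measure X) (A : Set X) (u : X → ℝ) : Prop :=
  ∀ x ∈ A, ∃ r > (0 : ℝ), NNorm μ (A ∩ Metric.ball x r) u < ∞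

/-- `u ∈ N^{1,1}(Ω')` for every bounded open `Ω' ⊆ X`. -/
def MemN11LocBounded (μ : Measure X) (u : X → ℝ) : Prop :=
  ∀ Ω' : Set X, IsOpen Ω' → Bornology.IsBounded Ω' → NNorm μ Ω' u < ∞

/-- `u ∈ N^{1,1}_0(Ω)`: `u ∈ N^{1,1}(X)` and `u = 0` outside `Ω`. -/
def MemN110 (μ : Measure X) (Ω : Set X) (u : X → ℝ) : Prop :=
  MemN11 μ Set.univ u ∧ ∀ x ∉ Ω, u x = 0

/-- The `1`-capacity `capa₁(A) = inf {‖u‖_{N^{1,1}(X)} : u ∈ N^{1,1}(X), u ≥ 1 on A}`. -/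
def capa1 (μ : Measure X) (A : Set X) : ℝ≥0∞ :=
  ⨅ (u : X → ℝ) (_ : MemN11 μ Set.univ u) (_ : ∀ x ∈ A, 1 ≤ u x), NNorm μ Set.univ u

/-- `U` is `1`-quasiopen: for every `ε > 0` there is an open `G` with `capa₁(G) < ε`
such that `U ∪ G` is open. -/
def QuasiOpen (μ : Measure X) (U : Set X) : Prop :=
  ∀ ε : ℝ, 0 < ε → ∃ G : Set X, IsOpen G ∧ capa1 μ G < ENNReal.ofReal ε ∧ IsOpen (U ∪ G)

/-- `u ∈ L¹_loc(A)`. -/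
def MemL1Loc (μ : Measure X) (A : Set X) (u : X → ℝ) : Prop :=
  AEMeasurable u (μ.restrict A) ∧
    ∀ x ∈ A, ∃ r > (0 : ℝ), (∫⁻ y in A ∩ Metric.ball x r, ENNReal.ofReal |u y| ∂μ) < ∞

/-- `v i → u` in `L¹_loc(A)`: every `x ∈ A` has a ball `B` with `v i → u` in `L¹(A ∩ B)`. -/
def L1LocConv (μ : Measure X) (A : Set X) (v : ℕ → X → ℝ) (u : X → ℝ) : Prop :=
  ∀ x ∈ A, ∃ r > (0 : ℝ),
    Filter.Tendsto (fun i => ∫⁻ y in A ∩ Metric.ball x r, ENNReal.ofReal |v i y - u y| ∂μ)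
      Filter.atTop (𝓝 0)

/-- `u` is locally Lipschitz on `Ω`. -/
def LocLipOn (u : X → ℝ) (Ω : Set X) : Prop :=
  ∀ x ∈ Ω, ∃ r > (0 : ℝ), ∃ K : ℝ≥0, LipschitzOnWith K u (Ω ∩ Metric.ball x r)

/-- The total variation `‖Du‖(Ω)` of `u` in an open set `Ω`: the infimum of
`liminf_i ∫_Ω g_{v i} dμ` over sequences of locally Lipschitz functions `v i → u`
in `L¹_loc(Ω)`, where `g_{v i}` is the minimal `1`-weak upper gradient of `v i` in `Ω`. -/
def tvOpen (μ : Measure X) (Ω : Set X) (u : X → ℝ) : ℝ≥0∞ :=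
  ⨅ (v : ℕ → X → ℝ) (g : ℕ → X → ℝ≥0∞) (_ : ∀ i, LocLipOn (v i) Ω)
    (_ : ∀ i, IsMinimalWUG μ (v i) (g i) Ω) (_ : L1LocConv μ Ω v u),
    Filter.liminf (fun i => ∫⁻ x in Ω, g i x ∂μ) Filter.atTop

/-- The total variation `‖Du‖(A)` of `u` in an arbitrary set `A`:
`inf {‖Du‖(Ω) : Ω ⊇ A open}`. -/
def tv (μ : Measure X) (A : Set X) (u : X → ℝ) : ℝ≥0∞ :=
  ⨅ (Ω : Set X) (_ : IsOpen Ω) (_ : A ⊆ Ω), tvOpen μ Ω u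

/-- The perimeter `P(E, A) = ‖Dχ_E‖(A)` for arbitrary `A`. -/
def perim (μ : Measure X) (E A : Set X) : ℝ≥0∞ :=
  tv μ A (Set.indicator E (fun _ => (1 : ℝ)))

/-- The perimeter `P(E, Ω) = ‖Dχ_E‖(Ω)` for open `Ω`. -/
def perimOpen (μ : Measure X) (E Ω : Set X) : ℝ≥0∞ :=
  tvOpen μ Ω (Set.indicator E (fun _ => (1 : ℝ)))

/-- The measure `μ` is doubling with constant `Cd`. -/
def Doubling (μ : Measure X) (Cd : ℝ) : Prop :=
  1 ≤ Cd ∧ ∀ (x : X) (r : ℝ), 0 < r →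
    0 < μ (Metric.ball x (2 * r)) ∧
      μ (Metric.ball x (2 * r)) ≤ ENNReal.ofReal Cd * μ (Metric.ball x r) ∧
      μ (Metric.ball x r) < ∞

/-- The space supports a `(1,1)`-Poincaré inequality with constants `CP, lam`. -/
def Poincare (μ : Measure X) (CP lam : ℝ) : Prop :=
  1 ≤ CP ∧ 1 ≤ lam ∧ ∀ (x : X) (r : ℝ), 0 < r → ∀ (u : X → ℝ) (g : X → ℝ≥0∞),
    MemL1Loc μ Set.univ u → IsUpperGradient u g →
      ENNReal.ofReal (⨍ y in Metric.ball x r, |u y - ⨍ z in Metric.ball x r, u z ∂μ| ∂μ)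
        ≤ ENNReal.ofReal (CP * r) *
            ((∫⁻ y in Metric.ball x (lam * r), g y ∂μ) / μ (Metric.ball x (lam * r)))

/-- The restricted spherical Hausdorff content of codimension one. -/
def HR (μ : Measure X) (R : ℝ) (A : Set X) : ℝ≥0∞ :=
  ⨅ (c : ℕ → X) (r : ℕ → ℝ) (_ : ∀ i, 0 < r i ∧ r i ≤ R)
    (_ : A ⊆ ⋃ i, Metric.ball (c i) (r i)),
    ∑' i, μ (Metric.ball (c i) (r i)) / ENNReal.ofReal (r i)

/-- The codimension-one Hausdorff measure `H(A) = lim_{R → 0} H_R(A)`. -/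
def Hcodim (μ : Measure X) (A : Set X) : ℝ≥0∞ :=
  ⨆ (R : ℝ) (_ : 0 < R), HR μ R A

/-- The lower approximate limit `u^∧`. -/
def lowerApprox (μ : Measure X) (u : X → ℝ) (x : X) : EReal :=
  sSup ((fun t : ℝ => (t : EReal)) ''
    {t : ℝ | Filter.Tendsto
      (fun r => μ (Metric.ball x r ∩ {y | u y < t}) / μ (Metric.ball x r))
      (𝓝[>] (0 : ℝ)) (𝓝 0)})

/-- The upper approximate limit `u^∨`. -/
def upperApprox (μ : Measure X) (u : X → ℝ) (x : X) : EReal :=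
  sInf ((fun t : ℝ => (t : EReal)) ''
    {t : ℝ | Filter.Tendsto
      (fun r => μ (Metric.ball x r ∩ {y | t < u y}) / μ (Metric.ball x r))
      (𝓝[>] (0 : ℝ)) (𝓝 0)})

/-- `u ∈ BV_loc(X)`: `u ∈ L¹_loc(X)` with `‖Du‖(Ω') < ∞` for every bounded open `Ω'`. -/
def MemBVLoc (μ : Measure X) (u : X → ℝ) : Prop :=
  MemL1Loc μ Set.univ u ∧
    ∀ Ω' : Set X, IsOpen Ω' → Bornology.IsBounded Ω' → tvOpen μ Ω' u < ∞

/-- The measure-theoretic interior `I_E`. -/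
def mInterior (μ : Measure X) (E : Set X) : Set X :=
  {x | Filter.Tendsto (fun r => μ (Metric.ball x r \ E) / μ (Metric.ball x r))
    (𝓝[>] (0 : ℝ)) (𝓝 0)}

/-- The measure-theoretic exterior `O_E`. -/
def mExterior (μ : Measure X) (E : Set X) : Set X :=
  {x | Filter.Tendsto (fun r => μ (Metric.ball x r ∩ E) / μ (Metric.ball x r))
    (𝓝[>] (0 : ℝ)) (𝓝 0)}

/-- The measure-theoretic boundary `∂*E`: the points where both `E` and its complement
have positive upper density. -/
def mBoundary (μ : Measure X) (E : Set X) : Set X :=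
  {x | 0 < Filter.limsup (fun r => μ (Metric.ball x r ∩ E) / μ (Metric.ball x r))
        (𝓝[>] (0 : ℝ)) ∧
       0 < Filter.limsup (fun r => μ (Metric.ball x r \ E) / μ (Metric.ball x r))
        (𝓝[>] (0 : ℝ))}

/-!
Suppose that `‖Du_k‖(A_k) ≥ ε` along a subsequence with `capa₁(A_k) < 4⁻ᵏ`. Let `φ_k` be a locally
Lipschitz function with `φ_k > 1/2` near most of `A_k`, such that `φ_k` and its upper gradient are
bounded by some `h_k` with `∫ h_k < 4⁻ᵏ`, and let `v_k` be a locally Lipschitz approximation of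
`u_k` with almost the same energy. Truncating `v_k` at the variable height `2ᵏ (1 - 2 φ_k)₊` keeps
the convergence to `u` in `L¹_loc(Ω)`. It removes the energy of `v_k` in `{φ_k > 1/2}`, which is not
much less than `ε`, and creates energy at most `2 · 2ᵏ ∫ h_k → 0`; this contradicts the lower
semicontinuity of the total variation.

The functions `φ_k` approximate a capacitary test function from below. The test function and its
upper gradient are replaced by lower semicontinuous majorants, these by increasing Lipschitz
minorants, and infima over curves by infima over discrete chains; since `X` is proper, chains of
bounded cost converge to curves. The majorants exist because the test function is measurable: by the
Poincaré inequality it is Lipschitz on sets where a maximal function of its upper gradient is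
bounded.
-/

/-! ### Derivatives and increments on an interval -/

theorem ofReal_abs_sub_le_setLIntegral_of_abs_deriv_le {φ : ℝ → ℝ} {a b : ℝ} (hab : a ≤ b)
    (hφ : AbsolutelyContinuousOnInterval φ a b) {G : ℝ → ℝ≥0∞}
    (hG : ∀ᵐ t ∂volume.restrict (Icc a b), ENNReal.ofReal |deriv φ t| ≤ G t) :
    ENNReal.ofReal |φ a - φ b| ≤ ∫⁻ t in Icc a b, G t := by
  have increment_le : |φ a - φ b| ≤ ∫ t in Icc a b, |deriv φ t| := by
    rw [abs_sub_comm, ← hφ.integral_deriv_eq_sub, integral_Icc_eq_integral_Ioc,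
      ← intervalIntegral.integral_of_le hab]
    exact intervalIntegral.abs_integral_le_integral_abs hab
  have deriv_integrable : IntegrableOn (fun t => |deriv φ t|) (Icc a b) :=
    (intervalIntegrable_iff_integrableOn_Icc_of_le hab).1 hφ.intervalIntegrable_deriv.abs
  calc ENNReal.ofReal |φ a - φ b|
      ≤ ENNReal.ofReal (∫ t in Icc a b, |deriv φ t|) := ENNReal.ofReal_le_ofReal increment_le
    _ = ∫⁻ t in Icc a b, ENNReal.ofReal |deriv φ t| :=
        ofReal_integral_eq_lintegral_ofReal deriv_integrable (ae_of_all _ fun _ => abs_nonneg _)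
    _ ≤ ∫⁻ t in Icc a b, G t := lintegral_mono_ae hG

theorem abs_deriv_le_of_abs_sub_le_sub {φ F : ℝ → ℝ} {t F' : ℝ} (hF : HasDerivAt F F' t)
    (h : ∀ᶠ x in 𝓝[>] t, |φ x - φ t| ≤ F x - F t) : |deriv φ t| ≤ F' := by
  have slope_F := hF.tendsto_slope.mono_left (nhdsGT_le_nhdsNE t)
  by_cases hdiff : DifferentiableAt ℝ φ t
  · have slope_φ := (hdiff.hasDerivAt.tendsto_slope.mono_left (nhdsGT_le_nhdsNE t)).abs
    refine le_of_tendsto_of_tendsto slope_φ slope_F ?_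
    filter_upwards [h, self_mem_nhdsWithin] with x hx htx
    rw [slope_def_field, slope_def_field, abs_div, abs_of_pos (sub_pos.2 htx : 0 < x - t)]
    exact div_le_div_of_nonneg_right hx (sub_pos.2 htx).le
  · rw [deriv_zero_of_not_differentiableAt hdiff, abs_zero]
    refine ge_of_tendsto slope_F ?_
    filter_upwards [h, self_mem_nhdsWithin] with x hx htx
    rw [slope_def_field]
    exact div_nonneg ((abs_nonneg _).trans hx) (sub_pos.2 htx).le

theorem ae_abs_deriv_le_of_abs_sub_le_integral {φ f : ℝ → ℝ} {a b : ℝ} (hab : a ≤ b)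
    (hf : IntegrableOn f (Icc a b))
    (hφ : ∀ s t, a ≤ s → s ≤ t → t ≤ b → |φ t - φ s| ≤ ∫ r in s..t, f r) :
    ∀ᵐ t ∂volume.restrict (Icc a b), |deriv φ t| ≤ f t := by
  have hf' : IntervalIntegrable f volume a b :=
    (intervalIntegrable_iff_integrableOn_Icc_of_le hab).2 hf
  have hsub : ∀ {s t : ℝ}, a ≤ s → s ≤ t → t ≤ b → IntervalIntegrable f volume s t :=
    fun has hst htb => hf'.mono_set (by
      rw [uIcc_of_le hst, uIcc_of_le hab]; exact Icc_subset_Icc has htb)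
  rw [← Measure.restrict_congr_set Ioo_ae_eq_Icc, ae_restrict_iff' measurableSet_Ioo]
  filter_upwards [hf'.ae_hasDerivAt_integral] with t ht htab
  have hderiv := ht (by rw [uIcc_of_le hab]; exact Ioo_subset_Icc_self htab) a left_mem_uIcc
  refine abs_deriv_le_of_abs_sub_le_sub hderiv ?_
  filter_upwards [Ioo_mem_nhdsGT htab.2] with x hx
  rw [intervalIntegral.integral_interval_sub_left
    (hsub le_rfl (htab.1.trans hx.1).le hx.2.le) (hsub le_rfl htab.1.le htab.2.le)]
  exact hφ t x htab.1.le hx.1.le hx.2.le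

theorem ae_ofReal_abs_deriv_le_of_le_setLIntegral {φ : ℝ → ℝ} {a b : ℝ} (hab : a ≤ b)
    {G : ℝ → ℝ≥0∞} (hG : AEMeasurable G (volume.restrict (Icc a b)))
    (hGfin : ∫⁻ t in Icc a b, G t ≠ ∞)
    (hφ : ∀ s t, a ≤ s → s ≤ t → t ≤ b →
      ENNReal.ofReal |φ s - φ t| ≤ ∫⁻ r in Icc s t, G r) :
    ∀ᵐ t ∂volume.restrict (Icc a b), ENNReal.ofReal |deriv φ t| ≤ G t := by
  have G_lt_top : ∀ᵐ t ∂volume.restrict (Icc a b), G t < ∞ := ae_lt_top' hG hGfin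
  have increment_le : ∀ s t, a ≤ s → s ≤ t → t ≤ b →
      |φ t - φ s| ≤ ∫ r in s..t, (G r).toReal := by
    intro s t has hst htb
    have hle := Measure.restrict_mono (Icc_subset_Icc has htb) (le_refl (volume : Measure ℝ))
    have hfin : ∫⁻ r in Icc s t, G r ≠ ∞ := ne_top_of_le_ne_top hGfin (lintegral_mono' hle le_rfl)
    rw [intervalIntegral.integral_of_le hst, ← integral_Icc_eq_integral_Ioc,
      integral_toReal (hG.mono_measure hle) (ae_mono hle G_lt_top), abs_sub_comm]
    exact (ENNReal.ofReal_le_iff_le_toReal hfin).1 (hφ s t has hst htb)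
  filter_upwards [ae_abs_deriv_le_of_abs_sub_le_integral hab
    (integrable_toReal_of_lintegral_ne_top hG hGfin) increment_le] with t ht
  exact ENNReal.ofReal_le_of_le_toReal ht

/-! ### Curves and the filter of `1`-almost every curve -/

section Subcurve
omit [MeasurableSpace X] [BorelSpace X]

/-- The restriction of `γ` to the parameter interval `[s, t]`, shifted to start at `0`. -/
def Curve.sub (γ : Curve X) (s t : ℝ) (hs : 0 ≤ s) (hst : s ≤ t) (ht : t ≤ γ.len) : Curve X where
  len := t - s
  len_nonneg := sub_nonneg.2 hst
  toFun r := γ.toFun (s + r)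
  lip := by
    have hshift : LipschitzOnWith 1 (fun r : ℝ => s + r) (Icc 0 (t - s)) :=
      (isometry_add_left s).lipschitz.lipschitzOnWith
    have hmaps : MapsTo (fun r : ℝ => s + r) (Icc 0 (t - s)) (Icc 0 γ.len) :=
      fun r hr => ⟨by linarith [hr.1], by linarith [hr.2]⟩
    simpa only [mul_one, Function.comp_def] using γ.lip.comp hshift hmaps

theorem Curve.integral_sub (γ : Curve X) {s t : ℝ} (hs : 0 ≤ s) (hst : s ≤ t) (ht : t ≤ γ.len)
    (g : X → ℝ≥0∞) : (γ.sub s t hs hst ht).integral g = ∫⁻ r in Icc s t, g (γ.toFun r) := by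
  have hpre : (fun r : ℝ => s + r) ⁻¹' Icc s t = Icc 0 (t - s) := by
    rw [preimage_const_add_Icc, sub_self]
  rw [← (measurePreserving_add_left volume s).setLIntegral_comp_preimage_emb
    (MeasurableEquiv.addLeft s).measurableEmbedding (fun r => g (γ.toFun r)), hpre]
  rfl

theorem Curve.In.sub {γ : Curve X} {A : Set X} (h : γ.In A) {s t : ℝ} (hs : 0 ≤ s) (hst : s ≤ t)
    (ht : t ≤ γ.len) : (γ.sub s t hs hst ht).In A :=
  fun r hr => h (s + r) ⟨add_nonneg hs hr.1, by linarith [show r ≤ t - s from hr.2]⟩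

theorem Curve.In.mono {γ : Curve X} {A B : Set X} (h : γ.In A) (hAB : A ⊆ B) : γ.In B :=
  fun t ht => hAB (h t ht)

theorem UGIneq.sub_iff {γ : Curve X} {u : X → ℝ} {g : X → ℝ≥0∞} {s t : ℝ} (hs : 0 ≤ s)
    (hst : s ≤ t) (ht : t ≤ γ.len) :
    UGIneq u g (γ.sub s t hs hst ht) ↔
      ENNReal.ofReal |u (γ.toFun s) - u (γ.toFun t)| ≤ ∫⁻ r in Icc s t, g (γ.toFun r) := by
  rw [UGIneq, γ.integral_sub]
  simp only [Curve.sub, add_zero, add_sub_cancel]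

theorem LocLipOn.exists_lipschitzOnWith_comp {Ω : Set X} {v : X → ℝ} (hv : LocLipOn v Ω)
    {γ : Curve X} (hγ : γ.In Ω) :
    ∃ K : ℝ≥0, LipschitzOnWith K (v ∘ γ.toFun) (Icc 0 γ.len) := by
  refine LocallyLipschitzOn.exists_lipschitzOnWith_of_compact isCompact_Icc fun t ht => ?_
  obtain ⟨r, hr, K, hK⟩ := hv _ (hγ t ht)
  refine ⟨K, Icc 0 γ.len ∩ γ.toFun ⁻¹' ball (γ.toFun t) r,
    inter_mem self_mem_nhdsWithin (γ.lip.continuousOn t ht (ball_mem_nhds _ hr)), ?_⟩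
  have hmaps : MapsTo γ.toFun (Icc 0 γ.len ∩ γ.toFun ⁻¹' ball (γ.toFun t) r)
      (Ω ∩ ball (γ.toFun t) r) := fun s hs => ⟨hγ s hs.1, hs.2⟩
  simpa only [mul_one] using hK.comp (γ.lip.mono inter_subset_left) hmaps

theorem UGIneq.of_ae_abs_deriv_le {Ω : Set X} {v : X → ℝ} (hv : LocLipOn v Ω) {γ : Curve X}
    (hγ : γ.In Ω) {g : X → ℝ≥0∞}
    (hg : ∀ᵐ t ∂volume.restrict (Icc 0 γ.len),
      ENNReal.ofReal |deriv (v ∘ γ.toFun) t| ≤ g (γ.toFun t)) : UGIneq v g γ := by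
  obtain ⟨K, hK⟩ := hv.exists_lipschitzOnWith_comp hγ
  rw [← uIcc_of_le γ.len_nonneg] at hK
  exact ofReal_abs_sub_le_setLIntegral_of_abs_deriv_le γ.len_nonneg
    hK.absolutelyContinuousOnInterval hg

end Subcurve

theorem Curve.aemeasurable_comp (γ : Curve X) {g : X → ℝ≥0∞} (hg : Measurable g) :
    AEMeasurable (fun t => g (γ.toFun t)) (volume.restrict (Icc 0 γ.len)) :=
  hg.comp_aemeasurable (γ.lip.continuousOn.aemeasurable measurableSet_Icc)

section CurveAE
variable {μ : Measure X}

omit [BorelSpace X] in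
theorem ZeroMod.mono {Γ Γ' : Set (Curve X)} (h : ZeroMod μ Γ') (hsub : Γ ⊆ Γ') : ZeroMod μ Γ :=
  let ⟨ρ, hρ, hρint, htop⟩ := h
  ⟨ρ, hρ, hρint, fun γ hγ => htop γ (hsub hγ)⟩

theorem ZeroMod.iUnion {ι : Type*} [Countable ι] {Γ : ι → Set (Curve X)}
    (h : ∀ i, ZeroMod μ (Γ i)) : ZeroMod μ (⋃ i, Γ i) := by
  choose ρ hρ hρint htop using h
  obtain ⟨ε, hε, hεsum⟩ := ENNReal.exists_pos_tsum_mul_lt_of_countable one_ne_zero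
    (fun i => ∫⁻ x, ρ i x ∂μ) fun i => (hρint i).ne
  refine ⟨fun x => ∑' i, ρ i x * ε i, .tsum fun i => (hρ i).mul_const _, ?_, ?_⟩
  · rw [lintegral_tsum fun i => ((hρ i).mul_const _).aemeasurable]
    simp_rw [lintegral_mul_const _ (hρ _)]
    exact hεsum.trans ENNReal.one_lt_top
  · intro γ hγ
    obtain ⟨i, hi⟩ := mem_iUnion.1 hγ
    refine top_le_iff.1 ?_
    calc ∞ = γ.integral (ρ i) * ε i := by
          rw [htop i γ hi, ENNReal.top_mul (ENNReal.coe_pos.2 (hε i)).ne']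
      _ = γ.integral fun x => ρ i x * ε i :=
          (lintegral_mul_const'' _ (γ.aemeasurable_comp (hρ i))).symm
      _ ≤ γ.integral fun x => ∑' i, ρ i x * ε i :=
          lintegral_mono fun t => ENNReal.le_tsum (f := fun i => ρ i (γ.toFun t) * ε i) i

variable (μ) in
/-- The filter of families of curves containing `1`-almost every curve, that is, whose complement
has zero `1`-modulus. -/
def curveAE : Filter (Curve X) :=
  .ofCountableInter {Γ | ZeroMod μ Γᶜ}
    (fun 𝒮 h𝒮 hsub => by
      have := h𝒮.to_subtype
      rw [mem_ofPred_eq, compl_sInter, sUnion_image, biUnion_eq_iUnion]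
      exact ZeroMod.iUnion fun Γ : 𝒮 => hsub Γ.2)
    fun _ _ h hsub => ZeroMod.mono h (compl_subset_compl.2 hsub)

instance : CountableInterFilter (curveAE μ) := countableInter_ofCountableInter _ _ _

theorem eventually_curveAE {P : Curve X → Prop} :
    (∀ᶠ γ in curveAE μ, P γ) ↔ ZeroMod μ {γ | ¬ P γ} :=
  Iff.rfl

theorem isWeakUpperGradientOn_iff {u : X → ℝ} {g : X → ℝ≥0∞} {A : Set X} :
    IsWeakUpperGradientOn μ u g A ↔
      AEMeasurable g μ ∧ ∀ᶠ γ in curveAE μ, γ.In A → UGIneq u g γ := by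
  simp only [eventually_curveAE, Classical.not_imp, IsWeakUpperGradientOn]

theorem eventually_integral_ne_top {ρ : X → ℝ≥0∞} (hρ : Measurable ρ) (hρint : ∫⁻ x, ρ x ∂μ < ∞) :
    ∀ᶠ γ in curveAE μ, γ.integral ρ ≠ ∞ :=
  ⟨ρ, hρ, hρint, fun _ hγ => not_not.1 hγ⟩

theorem eventually_ae_comp_of_ae {P : X → Prop} (h : ∀ᵐ x ∂μ, P x) :
    ∀ᶠ γ in curveAE μ, ∀ᵐ t ∂volume.restrict (Icc 0 γ.len), P (γ.toFun t) := by
  set N := toMeasurable μ {x | ¬ P x}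
  have hN : MeasurableSet N := measurableSet_toMeasurable _ _
  have htop : Measurable (N.indicator fun _ => (∞ : ℝ≥0∞)) := measurable_const.indicator hN
  have h_int : ∫⁻ x, N.indicator (fun _ => ∞) x ∂μ < ∞ := by
    have hN0 : μ N = 0 := (measure_toMeasurable _).trans (ae_iff.1 h)
    rw [lintegral_indicator_const hN, hN0, mul_zero]
    exact ENNReal.zero_lt_top
  filter_upwards [eventually_integral_ne_top htop h_int] with γ hγ
  filter_upwards [ae_lt_top' (γ.aemeasurable_comp htop) hγ] with t ht
  by_contra hP
  have hmem : γ.toFun t ∈ N := subset_toMeasurable _ _ hP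
  rw [indicator_of_mem hmem] at ht
  exact ht.false

theorem eventually_forall_sub {P : Curve X → Prop} (h : ∀ᶠ γ in curveAE μ, P γ) :
    ∀ᶠ γ in curveAE μ, ∀ s t (hs : 0 ≤ s) (hst : s ≤ t) (ht : t ≤ γ.len),
      P (γ.sub s t hs hst ht) := by
  obtain ⟨ρ, hρ, hρint, htop⟩ := h
  filter_upwards [eventually_integral_ne_top hρ hρint] with γ hγ s t hs hst ht
  by_contra hP
  refine hγ (top_le_iff.1 ?_)
  rw [← htop _ hP, γ.integral_sub]
  exact lintegral_mono_set (Icc_subset_Icc hs ht)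

theorem LIntegrableLocOn.eventually_integral_lt_top [SecondCountableTopology X] {Ω : Set X}
    (hΩ : IsOpen Ω) {g : X → ℝ≥0∞} (hg : Measurable g) (hloc : LIntegrableLocOn μ g Ω) :
    ∀ᶠ γ in curveAE μ, γ.In Ω → γ.integral g < ∞ := by
  choose! r hr hrint using hloc
  obtain ⟨S, hSΩ, hS, hcover⟩ := TopologicalSpace.countable_cover_nhdsWithin
    fun x hx => mem_nhdsWithin_of_mem_nhds (ball_mem_nhds x (hr x hx))
  have hball : ∀ x, MeasurableSet (Ω ∩ ball x (r x)) :=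
    fun x => (hΩ.inter isOpen_ball).measurableSet
  have finite_on_balls : ∀ᶠ γ in curveAE μ, ∀ x ∈ S,
      γ.integral ((Ω ∩ ball x (r x)).indicator g) ≠ ∞ := by
    refine (eventually_countable_ball hS).2 fun x hx =>
      eventually_integral_ne_top (hg.indicator (hball x)) ?_
    rw [lintegral_indicator (hball x)]
    exact hrint x (hSΩ hx)
  filter_upwards [finite_on_balls] with γ hfin hγ
  obtain ⟨F, hFS, hF, hFcover⟩ :=
    (isCompact_Icc.image_of_continuousOn γ.lip.continuousOn).elim_finite_subcover_image
      (fun x _ => isOpen_ball) ((image_subset_iff.2 hγ).trans hcover)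
  have g_le_sum : ∀ t ∈ Icc 0 γ.len,
      g (γ.toFun t) ≤ ∑ x ∈ hF.toFinset, (Ω ∩ ball x (r x)).indicator g (γ.toFun t) := by
    intro t ht
    obtain ⟨x, hxF, hx⟩ := mem_iUnion₂.1 (hFcover ⟨t, ht, rfl⟩)
    rw [← indicator_of_mem (show γ.toFun t ∈ Ω ∩ ball x (r x) from ⟨hγ t ht, hx⟩) g]
    exact Finset.single_le_sum (f := fun x => (Ω ∩ ball x (r x)).indicator g (γ.toFun t))
      (fun _ _ => zero_le) (hF.mem_toFinset.2 hxF)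
  refine (setLIntegral_mono' measurableSet_Icc g_le_sum).trans_lt ?_
  rw [lintegral_finsetSum' _ fun x _ => γ.aemeasurable_comp (hg.indicator (hball x)),
    ENNReal.sum_lt_top]
  exact fun x hx => (hfin x (hFS (hF.mem_toFinset.1 hx))).lt_top

end CurveAE

/-! ### Bounds for the derivative along almost every curve -/

/-- Along `1`-almost every curve in `Ω`, the derivative of `v` is bounded by `g` almost everywhere.
For locally Lipschitz `v` and locally integrable `g` this is equivalent to `g` being a `1`-weak
upper gradient, but unlike the latter notion it is local and so behaves well under infima and
gluing. -/
def DerivBoundOn (μ : Measure X) (v : X → ℝ) (g : X → ℝ≥0∞) (Ω : Set X) : Prop :=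
  ∀ᶠ γ in curveAE μ, γ.In Ω →
    ∀ᵐ t ∂volume.restrict (Icc 0 γ.len),
      ENNReal.ofReal |deriv (v ∘ γ.toFun) t| ≤ g (γ.toFun t)

section DerivBoundOn
variable {μ : Measure X} {v : X → ℝ} {g : X → ℝ≥0∞} {Ω U : Set X}

theorem DerivBoundOn.mono_set (h : DerivBoundOn μ v g Ω) (hU : U ⊆ Ω) : DerivBoundOn μ v g U := by
  filter_upwards [h] with γ hγ hγU
  exact hγ (hγU.mono hU)

theorem DerivBoundOn.isWeakUpperGradientOn (h : DerivBoundOn μ v g Ω) (hv : LocLipOn v Ω)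
    (hg : AEMeasurable g μ) : IsWeakUpperGradientOn μ v g Ω := by
  refine isWeakUpperGradientOn_iff.2 ⟨hg, ?_⟩
  filter_upwards [h] with γ hγ hγΩ
  exact .of_ae_abs_deriv_le hv hγΩ (hγ hγΩ)

theorem DerivBoundOn.iInf {ι : Type*} [Countable ι] {g : ι → X → ℝ≥0∞}
    (h : ∀ i, DerivBoundOn μ v (g i) Ω) : DerivBoundOn μ v (fun x => ⨅ i, g i x) Ω := by
  filter_upwards [eventually_countable_forall.2 h] with γ hγ hγΩ
  filter_upwards [ae_all_iff.2 fun i => hγ i hγΩ] with t ht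
  exact le_iInf ht

theorem IsWeakUpperGradientOn.derivBoundOn [SecondCountableTopology X]
    (h : IsWeakUpperGradientOn μ v g Ω) (hΩ : IsOpen Ω) (hloc : LIntegrableLocOn μ g Ω) :
    DerivBoundOn μ v g Ω := by
  obtain ⟨hg, hug⟩ := isWeakUpperGradientOn_iff.1 h
  have hloc' : LIntegrableLocOn μ (hg.mk g) Ω := by
    simpa only [LIntegrableLocOn, lintegral_congr_ae (ae_restrict_of_ae hg.ae_eq_mk)] using hloc
  filter_upwards [eventually_forall_sub hug, eventually_ae_comp_of_ae hg.ae_eq_mk,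
    hloc'.eventually_integral_lt_top hΩ hg.measurable_mk] with γ hsub hmk hfin hγ
  have deriv_le_mk := ae_ofReal_abs_deriv_le_of_le_setLIntegral (φ := v ∘ γ.toFun) γ.len_nonneg
    (γ.aemeasurable_comp hg.measurable_mk) (hfin hγ).ne fun s t hs hst ht => by
      rw [← lintegral_congr_ae
        (ae_mono (Measure.restrict_mono (Icc_subset_Icc hs ht) le_rfl) hmk)]
      exact (UGIneq.sub_iff hs hst ht).1 (hsub s t hs hst ht (hγ.sub hs hst ht))
  filter_upwards [deriv_le_mk, hmk] with t ht heq
  rwa [heq]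

theorem IsMinimalWUG.derivBoundOn [SecondCountableTopology X] (hg : IsMinimalWUG μ v g Ω)
    (hΩ : IsOpen Ω) (hfin : ∫⁻ x in Ω, g x ∂μ < ∞) : DerivBoundOn μ v g Ω :=
  hg.1.derivBoundOn hΩ fun _ _ =>
    ⟨1, one_pos, (lintegral_mono_set inter_subset_left).trans_lt hfin⟩

end DerivBoundOn

/-! ### Minimal weak upper gradients -/

/- A member of `F` maximizing `∫ (1 + g)⁻¹` for a finite measure equivalent to `μ` cannot be
decreased on a set of positive measure. -/
theorem exists_mem_ae_le_of_iInf_mem {α : Type*} {_ : MeasurableSpace α} {μ : Measure α} [SFinite μ]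
    {F : Set (α → ℝ≥0∞)} (hne : F.Nonempty) (hmeas : ∀ g ∈ F, AEMeasurable g μ)
    (hinf : ∀ g : ℕ → α → ℝ≥0∞, (∀ n, g n ∈ F) → (fun x => ⨅ n, g n x) ∈ F) :
    ∃ g ∈ F, ∀ g' ∈ F, g ≤ᵐ[μ] g' := by
  let Φ : (α → ℝ≥0∞) → ℝ≥0∞ := fun g => ∫⁻ x, (1 + g x)⁻¹ ∂μ.toFinite
  have Φ_anti : ∀ {g g' : α → ℝ≥0∞}, g ≤ g' → Φ g' ≤ Φ g := fun hle =>
    lintegral_mono fun x => ENNReal.inv_le_inv.2 (by gcongr; exact hle x)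
  have Φ_ne_top : ∀ g, Φ g ≠ ∞ := fun g => by
    refine ne_top_of_le_ne_top (measure_ne_top μ.toFinite univ) ?_
    rw [← lintegral_one]
    exact lintegral_mono fun x => ENNReal.inv_le_one.2 le_self_add
  obtain ⟨s, -, hs, hsF⟩ := exists_seq_tendsto_sSup (hne.image Φ) (OrderTop.bddAbove _)
  choose gs hgsF hgs using hsF
  let g : α → ℝ≥0∞ := fun x => ⨅ n, gs n x
  have hgF : g ∈ F := hinf gs hgsF
  have g_maximizes : sSup (Φ '' F) ≤ Φ g := le_of_tendsto hs <| .of_forall fun n => by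
    rw [← hgs n]
    exact Φ_anti fun x => iInf_le (fun n => gs n x) n
  refine ⟨g, hgF, fun g' hg' => ?_⟩
  let k : α → ℝ≥0∞ := fun x => ⨅ n : ℕ, (if n = 0 then g else g') x
  have hkF : k ∈ F := hinf _ fun n => by split_ifs <;> assumption
  have hkg : k ≤ g := fun x => iInf_le (fun n : ℕ => (if n = 0 then g else g') x) 0
  have hkg' : k ≤ g' := fun x => iInf_le (fun n : ℕ => (if n = 0 then g else g') x) 1
  have hk : AEMeasurable k μ.toFinite := (hmeas k hkF).mono_ac (toFinite_absolutelyContinuous μ)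
  have inv_le : ∀ x, (1 + g x)⁻¹ ≤ (1 + k x)⁻¹ := fun x =>
    ENNReal.inv_le_inv.2 (by gcongr; exact hkg x)
  have inv_eq := ae_eq_of_ae_le_of_lintegral_le (μ := μ.toFinite) (.of_forall inv_le) (Φ_ne_top g)
    (aemeasurable_const.add hk).inv ((le_sSup (mem_image_of_mem Φ hkF)).trans g_maximizes)
  filter_upwards [(absolutelyContinuous_toFinite μ).ae_le inv_eq] with x hx
  rw [(ENNReal.add_right_inj ENNReal.one_ne_top).1 (inv_injective hx)]
  exact hkg' x

theorem exists_isMinimalWUG [SecondCountableTopology X] {μ : Measure X} [SFinite μ] {v : X → ℝ}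
    {Ω : Set X} (hΩ : IsOpen Ω) (hv : LocLipOn v Ω) :
    ∃ g, IsMinimalWUG μ v g Ω ∧
      ∀ g', AEMeasurable g' μ → DerivBoundOn μ v g' Ω → g ≤ᵐ[μ] g' := by
  let F : Set (X → ℝ≥0∞) := {g | AEMeasurable g μ ∧ DerivBoundOn μ v g Ω}
  have top_mem : (fun _ => ∞) ∈ F :=
    ⟨aemeasurable_const, .of_forall fun _ _ => .of_forall fun _ => le_top⟩
  obtain ⟨g, ⟨hg, hgv⟩, hmin⟩ := exists_mem_ae_le_of_iInf_mem ⟨_, top_mem⟩ (fun _ h => h.1)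
    fun g hg => ⟨.iInf fun n => (hg n).1, .iInf fun n => (hg n).2⟩
  refine ⟨g, ⟨hgv.isWeakUpperGradientOn hv hg, fun g' hg' hloc => ?_⟩,
    fun g' hg' hgv' => hmin g' ⟨hg', hgv'⟩⟩
  exact ae_restrict_of_ae (hmin g' ⟨hg'.1, hg'.derivBoundOn hΩ hloc⟩)

/-! ### Local convergence and the total variation -/

section TotalVariation
variable {μ : Measure X} {A B Ω : Set X} {v : ℕ → X → ℝ} {u : X → ℝ}

omit [MeasurableSpace X] [BorelSpace X] in
theorem LocLipOn.mono {u : X → ℝ} (h : LocLipOn u A) (hBA : B ⊆ A) : LocLipOn u B := fun x hx =>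
  let ⟨r, hr, K, hK⟩ := h x (hBA hx)
  ⟨r, hr, K, hK.mono (inter_subset_inter_left _ hBA)⟩

omit [BorelSpace X]

theorem L1LocConv.mono (h : L1LocConv μ A v u) (hBA : B ⊆ A) : L1LocConv μ B v u := fun x hx =>
  let ⟨r, hr, hlim⟩ := h x (hBA hx)
  ⟨r, hr, tendsto_of_tendsto_of_tendsto_of_le_of_le tendsto_const_nhds hlim (fun _ => zero_le)
    fun _ => lintegral_mono_set (inter_subset_inter_left _ hBA)⟩

theorem L1LocConv.comp (h : L1LocConv μ A v u) {σ : ℕ → ℕ} (hσ : Tendsto σ atTop atTop) :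
    L1LocConv μ A (fun j => v (σ j)) u := fun x hx =>
  let ⟨r, hr, hlim⟩ := h x hx
  ⟨r, hr, hlim.comp hσ⟩

theorem L1LocConv.tendsto_setLIntegral_of_isCompact (h : L1LocConv μ A v u) {K : Set X}
    (hK : IsCompact K) (hKA : K ⊆ A) :
    Tendsto (fun i => ∫⁻ y in K, ENNReal.ofReal |v i y - u y| ∂μ) atTop (𝓝 0) := by
  refine hK.induction_on (p := fun s =>
    Tendsto (fun i => ∫⁻ y in s, ENNReal.ofReal |v i y - u y| ∂μ) atTop (𝓝 0)) ?_ ?_ ?_ ?_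
  · simp
  · intro s t hst ht
    exact tendsto_of_tendsto_of_tendsto_of_le_of_le tendsto_const_nhds ht
      (fun _ => zero_le) fun i => lintegral_mono_set hst
  · intro s t hs ht
    exact tendsto_of_tendsto_of_tendsto_of_le_of_le tendsto_const_nhds
      (by simpa only [add_zero] using hs.add ht) (fun _ => zero_le)
      fun i => lintegral_union_le _ _ _
  · intro x hx
    obtain ⟨r, hr, hlim⟩ := h x (hKA hx)
    exact ⟨A ∩ ball x r, inter_mem (mem_of_superset self_mem_nhdsWithin hKA)
      (mem_nhdsWithin_of_mem_nhds (ball_mem_nhds x hr)), hlim⟩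

end TotalVariation

section TotalVariation
variable [SecondCountableTopology X] {μ : Measure X} [SFinite μ] {Ω : Set X} {u : X → ℝ}

theorem tvOpen_le_liminf_of_derivBoundOn (hΩ : IsOpen Ω) {v : ℕ → X → ℝ} {h : ℕ → X → ℝ≥0∞}
    (hv : ∀ i, LocLipOn (v i) Ω) (hh : ∀ i, AEMeasurable (h i) μ)
    (hvh : ∀ i, DerivBoundOn μ (v i) (h i) Ω) (hconv : L1LocConv μ Ω v u) :
    tvOpen μ Ω u ≤ liminf (fun i => ∫⁻ x in Ω, h i x ∂μ) atTop := by
  choose g hg hgh using fun i => exists_isMinimalWUG (μ := μ) hΩ (hv i)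
  calc tvOpen μ Ω u ≤ liminf (fun i => ∫⁻ x in Ω, g i x ∂μ) atTop :=
        iInf₂_le_of_le v g (iInf₂_le_of_le hv hg (iInf_le _ hconv))
    _ ≤ liminf (fun i => ∫⁻ x in Ω, h i x ∂μ) atTop :=
        liminf_le_liminf <| .of_forall fun i =>
          lintegral_mono_ae (ae_restrict_of_ae (hgh i _ (hh i) (hvh i)))

theorem exists_locLipOn_approx_of_tvOpen_lt {G K : Set X} (hΩ : IsOpen Ω) (hG : IsOpen G)
    (hGΩ : G ⊆ Ω) (hK : IsCompact K) (hKΩ : K ⊆ Ω) {T ε η : ℝ≥0∞} (hT : tvOpen μ Ω u < T)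
    (hε : ε < tvOpen μ G u) (hη : 0 < η) :
    ∃ v g, LocLipOn v Ω ∧ AEMeasurable g μ ∧ DerivBoundOn μ v g Ω ∧ ∫⁻ x in Ω, g x ∂μ < T ∧
      ε < ∫⁻ x in G, g x ∂μ ∧ ∫⁻ x in K, ENNReal.ofReal |v x - u x| ∂μ < η := by
  simp only [tvOpen, iInf_lt_iff] at hT
  obtain ⟨v, g, hv, hg, hvu, hlim⟩ := hT
  obtain ⟨σ, hσ, hσT⟩ := extraction_of_frequently_atTop
    (frequently_lt_of_liminf_lt (by isBoundedDefault) hlim)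
  have hvg : ∀ j, DerivBoundOn μ (v (σ j)) (g (σ j)) Ω :=
    fun j => (hg _).derivBoundOn hΩ ((hσT j).trans_le le_top)
  have hconv := hvu.comp hσ.tendsto_atTop
  have large_on_G : ∀ᶠ j in atTop, ε < ∫⁻ x in G, g (σ j) x ∂μ :=
    eventually_lt_of_lt_liminf (hε.trans_le (tvOpen_le_liminf_of_derivBoundOn hG
      (fun j => (hv _).mono hGΩ) (fun j => (hg _).1.1) (fun j => (hvg j).mono_set hGΩ)
      (hconv.mono hGΩ))) (by isBoundedDefault)
  have close_on_K := (hconv.tendsto_setLIntegral_of_isCompact hK hKΩ).eventually_lt_const hη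
  obtain ⟨j, hjG, hjK⟩ := (large_on_G.and close_on_K).exists
  exact ⟨v (σ j), g (σ j), hv _, (hg _).1.1, hvg j, hσT j, hjG, hjK⟩

end TotalVariation

/-! ### Lipschitz regularization of lower semicontinuous functions -/

section Chains
omit [MeasurableSpace X] [BorelSpace X]

/-- The `n`-Lipschitz regularization of `h`, namely the infimal convolution of `min h n` with
`n * dist`. For lower semicontinuous `h` these functions increase to `h`. -/
def lipApprox (h : X → ℝ≥0∞) (n : ℕ) (x : X) : ℝ≥0 :=
  (⨅ y, (min (h y) n + n * edist x y)).toNNReal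

theorem iInf_min_add_mul_edist_le (h : X → ℝ≥0∞) (n : ℕ) (x : X) :
    ⨅ y, (min (h y) n + n * edist x y) ≤ min (h x) n :=
  (iInf_le _ x).trans_eq (by rw [edist_self, mul_zero, add_zero])

theorem coe_lipApprox (h : X → ℝ≥0∞) (n : ℕ) (x : X) :
    (lipApprox h n x : ℝ≥0∞) = ⨅ y, (min (h y) n + n * edist x y) :=
  ENNReal.coe_toNNReal <| ne_top_of_le_ne_top (ENNReal.natCast_ne_top n)
    ((iInf_min_add_mul_edist_le h n x).trans (min_le_right _ _))

theorem monotone_lipApprox (h : X → ℝ≥0∞) : Monotone (lipApprox h) := fun m n hmn x => by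
  rw [← ENNReal.coe_le_coe, coe_lipApprox, coe_lipApprox]
  gcongr

theorem lipschitzWith_lipApprox (h : X → ℝ≥0∞) (n : ℕ) : LipschitzWith n (lipApprox h n) := by
  refine LipschitzWith.of_le_add_mul (f := fun x => (lipApprox h n x : ℝ)) n fun x y => ?_
  suffices (lipApprox h n x : ℝ≥0∞) ≤ lipApprox h n y + n * edist x y by
    rw [edist_nndist] at this
    exact_mod_cast this
  rw [coe_lipApprox, coe_lipApprox, ENNReal.iInf_add]
  refine iInf_mono fun z => ?_
  rw [add_assoc, ← mul_add, add_comm (edist y z)]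
  gcongr
  exact edist_triangle x y z

theorem le_coe_lipApprox {h : X → ℝ≥0∞} {b : ℝ≥0} {x : X} {r : ℝ}
    (hr : 0 < r) (hb : ∀ y ∈ ball x r, b ≤ h y) {n : ℕ} (hn : b ≤ n) (hnr : b / r ≤ n) :
    (b : ℝ≥0∞) ≤ lipApprox h n x := by
  rw [coe_lipApprox]
  refine le_iInf fun y => ?_
  by_cases hy : y ∈ ball x r
  · exact le_add_right (le_min (hb y hy) (by exact_mod_cast hn))
  · have hry : r ≤ dist x y := by rwa [mem_ball', not_lt] at hy
    have hbr : (b : ℝ) ≤ n * dist x y := ((div_le_iff₀ hr).1 hnr).trans (by gcongr)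
    rw [edist_nndist]
    exact le_add_left (by exact_mod_cast hbr)

theorem iSup_lipApprox {h : X → ℝ≥0∞} (hh : LowerSemicontinuous h) (x : X) :
    ⨆ n, (lipApprox h n x : ℝ≥0∞) = h x := by
  apply le_antisymm
  · refine iSup_le fun n => ?_
    rw [coe_lipApprox]
    exact (iInf_min_add_mul_edist_le h n x).trans (min_le_left _ _)
  · refine ENNReal.le_of_forall_nnreal_lt fun b hb => ?_
    obtain ⟨r, hr, hball⟩ := Metric.eventually_nhds_iff_ball.1 (hh x b hb)
    obtain ⟨n, hn⟩ := exists_nat_ge (max (b : ℝ) (b / r))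
    obtain ⟨hbn, hbr⟩ := max_le_iff.1 hn
    exact (le_coe_lipApprox hr (fun y hy => (hball y hy).le) (by exact_mod_cast hbn) hbr).trans
      (le_iSup (fun n => (lipApprox h n x : ℝ≥0∞)) n)

/-! ### Discrete chains -/

/-- A finite chain of points `vertex 0, …, vertex steps` starting at `x`, with steps of size at
most `ε`. The values of `vertex` beyond `steps` are irrelevant. -/
structure Chain (ε : ℝ≥0) (x : X) where
  vertex : ℕ → X
  steps : ℕ
  vertex_zero : vertex 0 = x
  dist_le : ∀ i < steps, dist (vertex i) (vertex (i + 1)) ≤ ε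

namespace Chain
variable {ε : ℝ≥0} {x y : X}

/-- The discrete analogue of the curve integral of `h`. -/
def sum (c : Chain ε x) (h : X → ℝ≥0) : ℝ≥0 :=
  ∑ i ∈ Finset.range c.steps, h (c.vertex i) * nndist (c.vertex i) (c.vertex (i + 1))

theorem sum_mono (c : Chain ε x) : Monotone c.sum := fun _ _ hh =>
  Finset.sum_le_sum fun _ _ => mul_le_mul_left (hh _) _

instance : Nonempty (Chain ε x) := ⟨⟨fun _ => x, 0, rfl, by simp⟩⟩

/-- The chain obtained by prepending the point `x`. -/
def cons (hxy : dist x y ≤ ε) (c : Chain ε y) : Chain ε x where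
  vertex k := Nat.casesOn k x c.vertex
  steps := c.steps + 1
  vertex_zero := rfl
  dist_le
    | 0, _ => (congrArg (dist x) c.vertex_zero).trans_le hxy
    | i + 1, hi => c.dist_le i (Nat.lt_of_succ_lt_succ hi)

theorem sum_cons (hxy : dist x y ≤ ε) (c : Chain ε y) (h : X → ℝ≥0) :
    (cons hxy c).sum h = c.sum h + h x * nndist x y := by
  simp only [sum, cons, Finset.sum_range_succ', c.vertex_zero]
  rfl

/-! ### Parametrization of a chain by length -/

/-- The length of the part of the chain up to `vertex k`. -/
def lengthTo (c : Chain ε x) (k : ℕ) : ℝ :=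
  ∑ i ∈ Finset.range k, dist (c.vertex i) (c.vertex (i + 1))

/-- The length of the chain. -/
def length (c : Chain ε x) : ℝ := c.lengthTo c.steps

/-- The last vertex reached by the chain within length `t`. -/
def index (c : Chain ε x) (t : ℝ) : ℕ :=
  open scoped Classical in Nat.findGreatest (fun k => c.lengthTo k ≤ t) c.steps

/-- The parametrization of the chain by length, as a step function. -/
def path (c : Chain ε x) (t : ℝ) : X := c.vertex (c.index t)

variable (c : Chain ε x)

theorem lengthTo_zero : c.lengthTo 0 = 0 := Finset.sum_range_zero _

theorem lengthTo_succ (k : ℕ) :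
    c.lengthTo (k + 1) = c.lengthTo k + dist (c.vertex k) (c.vertex (k + 1)) :=
  Finset.sum_range_succ _ _

theorem monotone_lengthTo : Monotone c.lengthTo :=
  monotone_nat_of_le_succ fun k => c.lengthTo_succ k ▸ le_add_of_nonneg_right dist_nonneg

theorem lengthTo_nonneg (k : ℕ) : 0 ≤ c.lengthTo k :=
  c.lengthTo_zero ▸ c.monotone_lengthTo k.zero_le

theorem length_nonneg : 0 ≤ c.length := c.lengthTo_nonneg _

theorem dist_vertex_le {j k : ℕ} (hjk : j ≤ k) :
    dist (c.vertex j) (c.vertex k) ≤ c.lengthTo k - c.lengthTo j := by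
  rw [le_sub_iff_add_le', lengthTo, lengthTo, Finset.range_eq_Ico, Finset.range_eq_Ico,
    ← Finset.sum_Ico_consecutive _ j.zero_le hjk]
  gcongr
  exact dist_le_Ico_sum_dist c.vertex hjk

theorem index_le_steps (t : ℝ) : c.index t ≤ c.steps := Nat.findGreatest_le _

theorem monotone_index : Monotone c.index := fun _ _ hst =>
  Nat.findGreatest_mono (fun _ hk => hk.trans hst) le_rfl

theorem lengthTo_index_le {t : ℝ} (ht : 0 ≤ t) : c.lengthTo (c.index t) ≤ t :=
  Nat.findGreatest_spec (P := fun k => c.lengthTo k ≤ t) c.steps.zero_le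
    (c.lengthTo_zero.trans_le ht)

theorem le_index {t : ℝ} {k : ℕ} (hk : k ≤ c.steps) (hkt : c.lengthTo k ≤ t) : k ≤ c.index t :=
  Nat.le_findGreatest hk hkt

theorem lt_lengthTo_index_add_one {t : ℝ} (ht : c.index t < c.steps) :
    t < c.lengthTo (c.index t + 1) :=
  lt_of_not_ge fun h => (c.le_index ht h).not_gt (Nat.lt_succ_self _)

theorem index_eq {k : ℕ} (hk : k < c.steps) {t : ℝ}
    (ht : t ∈ Ico (c.lengthTo k) (c.lengthTo (k + 1))) : c.index t = k := by
  refine (c.le_index hk.le ht.1).antisymm' (Nat.le_of_lt_succ ?_)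
  exact c.monotone_lengthTo.reflect_lt <|
    (c.lengthTo_index_le ((c.lengthTo_nonneg k).trans ht.1)).trans_lt ht.2

theorem path_zero : c.path 0 = x := by
  have h := c.dist_vertex_le (c.index 0).zero_le
  rw [c.lengthTo_zero, c.vertex_zero] at h
  exact (dist_le_zero.1 (h.trans (by linarith [c.lengthTo_index_le le_rfl]))).symm

theorem path_length : c.path c.length = c.vertex c.steps :=
  congrArg c.vertex ((c.index_le_steps _).antisymm (c.le_index le_rfl le_rfl))

theorem dist_path_le_of_le {s t : ℝ} (hs : 0 ≤ s) (hst : s ≤ t) :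
    dist (c.path s) (c.path t) ≤ t - s + ε := by
  have hdist := c.dist_vertex_le (c.monotone_index hst)
  rcases (c.index_le_steps s).lt_or_eq with hlt | heq
  · have hnext := c.lt_lengthTo_index_add_one hlt
    rw [c.lengthTo_succ] at hnext
    refine hdist.trans ?_
    linarith [c.dist_le _ hlt, c.lengthTo_index_le (hs.trans hst)]
  · have heq' : c.index t = c.index s :=
      ((c.index_le_steps t).trans_eq heq.symm).antisymm (c.monotone_index hst)
    rw [path, path, heq', dist_self]
    exact add_nonneg (sub_nonneg.2 hst) ε.2

theorem dist_path_le {s t : ℝ} (hs : 0 ≤ s) (ht : 0 ≤ t) :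
    dist (c.path s) (c.path t) ≤ dist s t + ε := by
  rcases le_total s t with hst | hts
  · rw [dist_comm s, Real.dist_eq, abs_of_nonneg (sub_nonneg.2 hst)]
    exact c.dist_path_le_of_le hs hst
  · rw [dist_comm, Real.dist_eq, abs_of_nonneg (sub_nonneg.2 hts)]
    exact c.dist_path_le_of_le ht hts

theorem setLIntegral_Ico_lengthTo_path_le (h : X → ℝ≥0) {k : ℕ} (hk : k ≤ c.steps) :
    ∫⁻ t in Ico 0 (c.lengthTo k), h (c.path t) ≤
      ∑ i ∈ Finset.range k, (h (c.vertex i) * nndist (c.vertex i) (c.vertex (i + 1)) : ℝ≥0∞) := by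
  induction k with
  | zero => simp [lengthTo_zero]
  | succ k ih =>
    have hlast : ∫⁻ t in Ico (c.lengthTo k) (c.lengthTo (k + 1)), (h (c.path t) : ℝ≥0∞) =
        h (c.vertex k) * nndist (c.vertex k) (c.vertex (k + 1)) := by
      rw [setLIntegral_congr_fun measurableSet_Ico
        fun t ht => by rw [path, c.index_eq hk ht], setLIntegral_const, Real.volume_Ico,
        c.lengthTo_succ, add_sub_cancel_left, ← edist_dist, edist_nndist]
    rw [← Ico_union_Ico_eq_Ico (c.lengthTo_nonneg k) (c.monotone_lengthTo k.le_succ),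
      Finset.sum_range_succ, ← hlast]
    exact (lintegral_union_le _ _ _).trans (by gcongr; exact ih (k.le_succ.trans hk))

theorem setLIntegral_Ico_path_le (h : X → ℝ≥0) :
    ∫⁻ t in Ico 0 c.length, h (c.path t) ≤ (c.sum h : ℝ≥0∞) := by
  simpa only [sum, length, ENNReal.ofNNReal_finsetSum, ENNReal.coe_mul] using
    c.setLIntegral_Ico_lengthTo_path_le h le_rfl

end Chain

/-- The least cost `W (end point) + ∑ h * step` of a chain starting at `x` with steps at most `ε`:
a discrete version of the largest function below `W` having `h` as an upper gradient. -/
def chainInf (ε : ℝ≥0) (h W : X → ℝ≥0) (x : X) : ℝ≥0 :=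
  ⨅ c : Chain ε x, (W (c.vertex c.steps) + c.sum h)

theorem chainInf_le (ε : ℝ≥0) (h W : X → ℝ≥0) (x : X) : chainInf ε h W x ≤ W x :=
  (ciInf_le' _ ⟨fun _ => x, 0, rfl, by simp⟩).trans_eq (by simp [Chain.sum])

theorem chainInf_le_mul_nndist_add {ε : ℝ≥0} (h W : X → ℝ≥0) {x y : X} (hxy : dist x y ≤ ε) :
    chainInf ε h W x ≤ h x * nndist x y + chainInf ε h W y := by
  rw [← tsub_le_iff_left]
  refine le_ciInf fun c => tsub_le_iff_left.2 ((ciInf_le' _ (c.cons hxy)).trans_eq ?_)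
  rw [Chain.sum_cons, add_comm (h x * nndist x y), ← add_assoc]
  rfl

theorem chainInf_mono {h h' W W' : X → ℝ≥0} (hh : h ≤ h') (hW : W ≤ W') {ε ε' : ℝ≥0}
    (hε : ε' ≤ ε) : chainInf ε h W ≤ chainInf ε' h' W' := fun _ =>
  le_ciInf fun c =>
    (ciInf_le' _ ⟨c.vertex, c.steps, c.vertex_zero, fun i hi => (c.dist_le i hi).trans hε⟩).trans
      (add_le_add (hW _) (c.sum_mono hh))

end Chains

/-! ### Limits of chains -/

section ChainLimit
omit [MeasurableSpace X] [BorelSpace X]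

theorem exists_lipschitzOnWith_tendstoLocallyUniformlyOn [ProperSpace X] {ι : Type*}
    {U : Ultrafilter ι} {ε : ι → ℝ≥0} (hε : Tendsto ε U (𝓝 0)) {γ : ι → ℝ → X} {z : X}
    (hγz : ∀ i, γ i 0 = z)
    (hγ : ∀ i, ∀ s ≥ 0, ∀ t ≥ 0, dist (γ i s) (γ i t) ≤ dist s t + ε i) :
    ∃ Γ : ℝ → X, Γ 0 = z ∧ LipschitzOnWith 1 Γ (Ici 0) ∧
      TendstoLocallyUniformlyOn γ Γ U (Ici 0) := by
  have hε' : Tendsto (fun i => (ε i : ℝ)) U (𝓝 0) := NNReal.tendsto_coe.2 hε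
  have hlim : ∀ t : ℝ, 0 ≤ t → ∃ y, Tendsto (fun i => γ i t) U (𝓝 y) := fun t ht => by
    have hmem : ∀ᶠ i in U, γ i t ∈ closedBall z (dist t 0 + 1) := by
      filter_upwards [hε'.eventually_le_const zero_lt_one] with i hi
      rw [mem_closedBall, ← hγz i]
      linarith [hγ i t ht 0 le_rfl]
    obtain ⟨y, -, hy⟩ := (isCompact_closedBall z (dist t 0 + 1)).ultrafilter_le_nhds
      (U.map fun i => γ i t) (le_principal_iff.2 hmem)
    exact ⟨y, hy⟩
  have : Nonempty X := ⟨z⟩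
  choose! Γ hΓ using hlim
  have hlip : ∀ s ≥ 0, ∀ t ≥ 0, dist (Γ s) (Γ t) ≤ dist s t := fun s hs t ht =>
    le_of_tendsto_of_tendsto' ((hΓ s hs).dist (hΓ t ht))
      (by simpa only [add_zero] using hε'.const_add (dist s t)) fun i => hγ i s hs t ht
  refine ⟨Γ, tendsto_nhds_unique (hΓ 0 le_rfl) (by simp only [hγz, tendsto_const_nhds]),
    LipschitzOnWith.of_dist_le_mul fun s hs t ht => by simpa using hlip s hs t ht,
    Metric.tendstoLocallyUniformlyOn_iff.2 fun η hη t ht => ?_⟩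
  refine ⟨_, inter_mem_nhdsWithin _ (ball_mem_nhds t (by positivity : 0 < η / 4)), ?_⟩
  filter_upwards [hε'.eventually_lt_const (by positivity : 0 < η / 4),
    Metric.tendsto_nhds.1 (hΓ t ht) (η / 4) (by positivity)] with i hεi hγi s ⟨hs, hst⟩
  have hst' : dist s t < η / 4 := hst
  have htriangle := dist_triangle4 (Γ s) (Γ t) (γ i t) (γ i s)
  rw [dist_comm (Γ t), dist_comm (γ i t) (γ i s)] at htriangle
  linarith [hlip s hs t ht, hγ i s hs t ht]

omit [MetricSpace X] in
theorem setLIntegral_Icc_le_of_forall_lt {f : ℝ → ℝ≥0∞} {a b : ℝ} {c : ℝ≥0∞}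
    (h : ∀ t < b, ∫⁻ s in Ico a t, f s ≤ c) : ∫⁻ s in Icc a b, f s ≤ c := by
  obtain ⟨t, ht_mono, ht_lt, ht_tendsto⟩ := exists_seq_strictMono_tendsto b
  have hunion : Ico a b = ⋃ n, Ico a (t n) := by
    ext s
    simp only [mem_iUnion, mem_Ico, exists_and_left]
    refine and_congr_right fun _ => ⟨fun hs => (ht_tendsto.eventually_const_lt hs).exists, ?_⟩
    rintro ⟨n, hn⟩
    exact hn.trans (ht_lt n)
  rw [setLIntegral_congr Ico_ae_eq_Icc.symm, hunion, setLIntegral_iUnion_of_directed]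
  · exact iSup_le fun n => h (t n) (ht_lt n)
  · exact Monotone.directed_le fun m n hmn => Ico_subset_Ico_right (ht_mono.monotone hmn)

theorem setLIntegral_comp_le_of_tendstoLocallyUniformlyOn {ι : Type*} {U : Filter ι} [U.NeBot]
    {γ : ι → ℝ → X} {Γ : ℝ → X} (hΓ : TendstoLocallyUniformlyOn γ Γ U (Ici 0)) {f : X → ℝ≥0}
    (hf : UniformContinuous f) {l : ι → ℝ} {L : ℝ} (hl : Tendsto l U (𝓝 L)) {C : ι → ℝ≥0∞}
    {c : ℝ≥0∞} (hC : Tendsto C U (𝓝 c))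
    (hle : ∀ᶠ i in U, ∫⁻ t in Ico 0 (l i), f (γ i t) ≤ C i) :
    ∫⁻ t in Icc 0 L, f (Γ t) ≤ c := by
  refine setLIntegral_Icc_le_of_forall_lt fun τ hτ => ?_
  have hunif : TendstoUniformlyOn (fun i => f ∘ γ i) (f ∘ Γ) U (Icc 0 τ) :=
    hf.comp_tendstoUniformlyOn <|
      (tendstoLocallyUniformlyOn_iff_tendstoUniformlyOn_of_compact isCompact_Icc).1
        (hΓ.mono Icc_subset_Ici_self)
  have hstep (η : ℝ≥0) (hη : 0 < η) :
      ∫⁻ t in Ico 0 τ, (f (Γ t) : ℝ≥0∞) ≤ c + η * volume (Ico 0 τ) := by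
    refine ge_of_tendsto (hC.add_const _) ?_
    filter_upwards [hle, hl.eventually_const_lt hτ,
      Metric.tendstoUniformlyOn_iff.1 hunif η hη] with i hi hτi hclose
    calc ∫⁻ t in Ico 0 τ, (f (Γ t) : ℝ≥0∞)
        ≤ ∫⁻ t in Ico 0 τ, (f (γ i t) + η : ℝ≥0∞) :=
          setLIntegral_mono' measurableSet_Ico fun t ht => by
            have hdist := (abs_lt.1 (hclose t (Ico_subset_Icc_self ht))).2.le
            exact_mod_cast sub_le_iff_le_add'.1 hdist
      _ = (∫⁻ t in Ico 0 τ, (f (γ i t) : ℝ≥0∞)) + η * volume (Ico 0 τ) := by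
          rw [lintegral_add_right _ measurable_const, setLIntegral_const]
      _ ≤ C i + η * volume (Ico 0 τ) := by
          gcongr
          exact (lintegral_mono_set (Ico_subset_Ico_right hτi.le)).trans hi
  have hlim : Tendsto (fun η : ℝ≥0 => c + η * volume (Ico 0 τ)) (𝓝[>] 0) (𝓝 c) := by
    have hcont : Continuous fun η : ℝ≥0 => c + η * volume (Ico 0 τ) :=
      continuous_const.add (ENNReal.continuous_mul_const measure_Ico_lt_top.ne
        |>.comp ENNReal.continuous_coe)
    simpa using (hcont.tendsto 0).mono_left nhdsWithin_le_nhds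
  exact ge_of_tendsto hlim (eventually_mem_nhdsWithin.mono hstep)

theorem setLIntegral_iSup_comp_le_of_tendstoLocallyUniformlyOn {ι : Type*} {U : Filter ι} [U.NeBot]
    {γ : ι → ℝ → X} {Γ : ℝ → X} (hΓ : TendstoLocallyUniformlyOn γ Γ U (Ici 0))
    {f : ℕ → X → ℝ≥0} (hf : ∀ n, UniformContinuous (f n)) (hf_mono : Monotone f) {l : ι → ℝ}
    {L : ℝ} (hΓ_cont : ContinuousOn Γ (Icc 0 L)) (hl : Tendsto l U (𝓝 L)) {C : ι → ℝ≥0∞}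
    {c : ℝ≥0∞} (hC : Tendsto C U (𝓝 c))
    (hle : ∀ n, ∀ᶠ i in U, ∫⁻ t in Ico 0 (l i), f n (γ i t) ≤ C i) :
    ∫⁻ t in Icc 0 L, ⨆ n, (f n (Γ t) : ℝ≥0∞) ≤ c := by
  rw [lintegral_iSup']
  · exact iSup_le fun n =>
      setLIntegral_comp_le_of_tendstoLocallyUniformlyOn hΓ (hf n) hl hC (hle n)
  · exact fun n => (((hf n).continuous.comp_continuousOn hΓ_cont).aemeasurable
      measurableSet_Icc).coe_nnreal_ennreal
  · exact Eventually.of_forall fun t m n hmn => ENNReal.coe_le_coe.2 (hf_mono hmn _)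

theorem exists_tendsto_ultrafilter_of_le {ι : Type*} (U : Ultrafilter ι) {f : ι → ℝ≥0} {b : ℝ≥0}
    (hf : ∀ i, f i ≤ b) : ∃ a ≤ b, Tendsto f U (𝓝 a) := by
  have hmem : ∀ᶠ i in U, f i ∈ Icc 0 b := .of_forall fun i => ⟨zero_le, hf i⟩
  obtain ⟨a, ha, hfa⟩ := (isCompact_Icc (a := 0) (b := b)).ultrafilter_le_nhds (U.map f)
    (le_principal_iff.2 hmem)
  exact ⟨a, ha.2, hfa⟩

/- Chains of cost at most `b` have a limit curve, cut off at length `T`: either the chains are long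
and the curve has length `T`, or their end points converge to that of the curve. -/
theorem exists_curve_of_chain_cost_le [ProperSpace X] {h W : ℕ → X → ℝ≥0}
    (hh : ∀ n, UniformContinuous (h n)) (hh_mono : Monotone h) (hW : ∀ n, Continuous (W n))
    (hW_mono : Monotone W) {ε : ℕ → ℝ≥0} (hε : Tendsto ε atTop (𝓝 0)) {z : X} {b : ℝ≥0}
    (c : ∀ n, Chain (ε n) z) (hc : ∀ n, W n ((c n).vertex (c n).steps) + (c n).sum (h n) ≤ b)
    (T : ℝ≥0) :
    ∃ (γ : Curve X) (e : ℝ≥0), γ.toFun 0 = z ∧ γ.integral (fun x => ⨆ n, (h n x : ℝ≥0∞)) ≤ e ∧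
      (γ.len = T ∧ e ≤ b ∨ ∀ m, W m (γ.toFun γ.len) + e ≤ b) := by
  let U : Ultrafilter ℕ := hyperfilter ℕ
  have hU : (U : Filter ℕ) ≤ atTop := Nat.hyperfilter_le_atTop
  let len : ℕ → ℝ≥0 := fun n => ⟨(c n).length, (c n).length_nonneg⟩
  obtain ⟨e, heb, he⟩ := exists_tendsto_ultrafilter_of_le U fun n => (le_add_self.trans (hc n) :)
  obtain ⟨L, -, hL⟩ := exists_tendsto_ultrafilter_of_le U fun n => min_le_right (len n) T
  obtain ⟨Γ, hΓz, hΓ_lip, hΓ⟩ := exists_lipschitzOnWith_tendstoLocallyUniformlyOn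
    (hε.mono_left hU) (fun n => (c n).path_zero)
    (fun n s hs t ht => (c n).dist_path_le hs ht)
  let γ : Curve X := ⟨L, L.2, Γ, hΓ_lip.mono Icc_subset_Ici_self⟩
  have henergy : γ.integral (fun x => ⨆ n, (h n x : ℝ≥0∞)) ≤ e := by
    refine setLIntegral_iSup_comp_le_of_tendstoLocallyUniformlyOn hΓ hh hh_mono
      (γ.lip.continuousOn) (NNReal.tendsto_coe.2 hL) (ENNReal.tendsto_coe.2 he) fun m => ?_
    filter_upwards [hU (eventually_ge_atTop m)] with n hmn
    calc ∫⁻ t in Ico 0 ((min (len n) T : ℝ≥0) : ℝ), (h m ((c n).path t) : ℝ≥0∞)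
        ≤ ∫⁻ t in Ico 0 (c n).length, (h m ((c n).path t) : ℝ≥0∞) :=
          lintegral_mono_set (Ico_subset_Ico_right (min_le_left _ _))
      _ ≤ (c n).sum (h m) := (c n).setLIntegral_Ico_path_le (h m)
      _ ≤ (c n).sum (h n) := by exact_mod_cast (c n).sum_mono (hh_mono hmn)
  refine ⟨γ, e, hΓz, henergy, ?_⟩
  rcases U.em fun n => len n ≤ T with hshort | hlong
  · right
    intro m
    have hlen : Tendsto (fun n => (c n).length) U (𝓝 L) := NNReal.tendsto_coe.2 <|
      hL.congr' (hshort.mono fun n hn => min_eq_left hn)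
    have hend : Tendsto (fun n => (c n).vertex (c n).steps) U (𝓝 (Γ L)) := by
      simp only [← Chain.path_length]
      exact hΓ.tendsto_comp (hΓ_lip.continuousOn L L.2) L.2
        (tendsto_nhdsWithin_iff.2 ⟨hlen, Eventually.of_forall fun n => (c n).length_nonneg⟩)
    refine le_of_tendsto ((((hW m).tendsto _).comp hend).add he) ?_
    filter_upwards [hU (eventually_ge_atTop m)] with n hmn
    exact (add_le_add_left (hW_mono hmn _) _).trans (hc n)
  · have hmin : (fun _ => T) =ᶠ[U] fun n => min (len n) T :=
      hlong.mono fun n hn => (min_eq_right (not_le.1 hn).le).symm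
    have hLT : L = T := tendsto_nhds_unique hL (tendsto_const_nhds.congr' hmin)
    exact .inl ⟨congrArg NNReal.toReal hLT, heb⟩

theorem UGIneq.le_add_of_integral_le {w : X → ℝ} {g : X → ℝ≥0∞} (hw : ∀ γ : Curve X, UGIneq w g γ)
    {γ : Curve X} {e : ℝ≥0} (he : γ.integral g ≤ e) {t : ℝ} (ht : t ∈ Icc 0 γ.len) :
    w (γ.toFun 0) ≤ w (γ.toFun t) + e := by
  have hsub := (UGIneq.sub_iff le_rfl ht.1 ht.2).1 (hw (γ.sub 0 t le_rfl ht.1 ht.2))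
  have habs : |w (γ.toFun 0) - w (γ.toFun t)| ≤ e := ENNReal.ofReal_le_coe.1 <|
    hsub.trans ((lintegral_mono_set (Icc_subset_Icc_right ht.2)).trans he)
  linarith [le_abs_self (w (γ.toFun 0) - w (γ.toFun t))]

theorem exists_lt_chainInf [ProperSpace X] {h W : ℕ → X → ℝ≥0}
    (hh : ∀ n, UniformContinuous (h n)) (hh_mono : Monotone h) (hW : ∀ n, Continuous (W n))
    (hW_mono : Monotone W) {ε : ℕ → ℝ≥0} (hε : Tendsto ε atTop (𝓝 0)) {w : X → ℝ}
    (hwW : ∀ x, ENNReal.ofReal (w x) ≤ ⨆ n, (W n x : ℝ≥0∞))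
    (hwh : ∀ x, ENNReal.ofReal (w x) ≤ ⨆ n, (h n x : ℝ≥0∞))
    (hug : ∀ γ : Curve X, UGIneq w (fun x => ⨆ n, (h n x : ℝ≥0∞)) γ) {z : X} {a : ℝ≥0}
    (ha : a < w z) : ∃ n, a < chainInf (ε n) (h n) (W n) z := by
  by_contra! hle
  obtain ⟨b, hab, hbw⟩ := exists_between (Real.lt_toNNReal_iff_coe_lt.2 ha)
  rw [Real.lt_toNNReal_iff_coe_lt, ← sub_pos] at hbw
  choose c hc using fun n => exists_lt_of_ciInf_lt ((hle n).trans_lt hab)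
  obtain ⟨γ, e, hγz, he, ⟨hlen, heb⟩ | hend⟩ := exists_curve_of_chain_cost_le hh hh_mono hW hW_mono
    hε c (fun n => (hc n).le) ((b + 1) / (w z - b)).toNNReal
  · have hT : γ.len = (b + 1) / (w z - b) := by
      rw [hlen, Real.coe_toNNReal _ (by positivity)]
    -- `w`, hence the upper gradient, is bounded below by `w z - b` along a curve of length `T`.
    have h_int : ENNReal.ofReal (b + 1) ≤ b := calc
      ENNReal.ofReal (b + 1) = ∫⁻ _ in Icc 0 γ.len, ENNReal.ofReal (w z - b) := by
        rw [setLIntegral_const, Real.volume_Icc, hT, sub_zero, ← ENNReal.ofReal_mul hbw.le,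
          mul_div_cancel₀ _ hbw.ne']
      _ ≤ γ.integral fun x => ⨆ n, (h n x : ℝ≥0∞) :=
        setLIntegral_mono' measurableSet_Icc fun t ht => by
          refine (ENNReal.ofReal_le_ofReal ?_).trans (hwh (γ.toFun t))
          have hwt := UGIneq.le_add_of_integral_le hug he ht
          rw [hγz] at hwt
          linarith [NNReal.coe_le_coe.2 heb]
      _ ≤ b := he.trans (by exact_mod_cast heb)
    exact (lt_add_one (b : ℝ)).not_ge (ENNReal.ofReal_le_coe.1 h_int)
  · have hwend := UGIneq.le_add_of_integral_le hug he ⟨γ.len_nonneg, le_rfl⟩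
    have hWend : w (γ.toFun γ.len) ≤ (b - e : ℝ≥0) := ENNReal.ofReal_le_coe.1 <|
      (hwW _).trans (iSup_le fun m => ENNReal.coe_le_coe.2 (le_tsub_of_add_le_right (hend m)))
    rw [NNReal.coe_sub (le_add_self.trans (hend 0))] at hWend
    rw [hγz] at hwend
    linarith

end ChainLimit

/-! ### Doubling measures -/

namespace Doubling
variable {μ : Measure X} {Cd : ℝ}

section
omit [BorelSpace X]

theorem measure_ball_pos (h : Doubling μ Cd) (x : X) {r : ℝ} (hr : 0 < r) : 0 < μ (ball x r) := by
  simpa only [mul_div_cancel₀ r two_ne_zero] using (h.2 x (r / 2) (by positivity)).1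

theorem measure_ball_lt_top (h : Doubling μ Cd) (x : X) (r : ℝ) : μ (ball x r) < ∞ := by
  rcases le_or_gt r 0 with hr | hr
  · simp only [ball_eq_empty.2 hr, measure_empty, ENNReal.zero_lt_top]
  · exact (h.2 x r hr).2.2

theorem measure_ball_two_pow_mul_le (h : Doubling μ Cd) (x : X) {r : ℝ} (hr : 0 < r) (k : ℕ) :
    μ (ball x (2 ^ k * r)) ≤ ENNReal.ofReal Cd ^ k * μ (ball x r) := by
  induction k with
  | zero => simp
  | succ k ih => calc
      μ (ball x (2 ^ (k + 1) * r)) = μ (ball x (2 * (2 ^ k * r))) := by ring_nf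
      _ ≤ ENNReal.ofReal Cd * μ (ball x (2 ^ k * r)) := (h.2 x _ (by positivity)).2.1
      _ ≤ ENNReal.ofReal Cd * (ENNReal.ofReal Cd ^ k * μ (ball x r)) := by gcongr
      _ = ENNReal.ofReal Cd ^ (k + 1) * μ (ball x r) := by rw [pow_succ', mul_assoc]

theorem measureReal_ball_two_pow_mul_le (h : Doubling μ Cd) (x : X) {r : ℝ} (hr : 0 < r) (k : ℕ) :
    μ.real (ball x (2 ^ k * r)) ≤ Cd ^ k * μ.real (ball x r) := by
  have hCd : 0 ≤ Cd := zero_le_one.trans h.1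
  have hfinite : ENNReal.ofReal Cd ^ k * μ (ball x r) ≠ ∞ :=
    ENNReal.mul_ne_top (by finiteness) (h.measure_ball_lt_top x r).ne
  simpa only [Measure.real, ENNReal.toReal_mul, ENNReal.toReal_pow, ENNReal.toReal_ofReal hCd] using
    ENNReal.toReal_mono hfinite (h.measure_ball_two_pow_mul_le x hr k)

theorem isOpenPosMeasure (h : Doubling μ Cd) : μ.IsOpenPosMeasure :=
  ⟨fun _ hU ⟨x, hx⟩ => by
    obtain ⟨r, hr, hrU⟩ := Metric.isOpen_iff.1 hU x hx
    exact ((h.measure_ball_pos x hr).trans_le (measure_mono hrU)).ne'⟩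

theorem isLocallyFiniteMeasure (h : Doubling μ Cd) : IsLocallyFiniteMeasure μ :=
  ⟨fun x => ⟨ball x 1, ball_mem_nhds x one_pos, h.measure_ball_lt_top x 1⟩⟩

theorem isUnifLocDoublingMeasure (h : Doubling μ Cd) : IsUnifLocDoublingMeasure μ := by
  refine ⟨⟨Cd.toNNReal ^ 2, ?_⟩⟩
  filter_upwards [self_mem_nhdsWithin] with r (hr : 0 < r) x
  calc μ (closedBall x (2 * r)) ≤ μ (ball x (2 ^ 2 * r)) :=
        measure_mono (closedBall_subset_ball (by linarith))
    _ ≤ ENNReal.ofReal Cd ^ 2 * μ (ball x r) := h.measure_ball_two_pow_mul_le x hr 2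
    _ ≤ (Cd.toNNReal ^ 2 : ℝ≥0) * μ (closedBall x r) := by
        rw [ENNReal.coe_pow]
        exact mul_le_mul' le_rfl (measure_mono ball_subset_closedBall)

end

theorem finite_of_pairwiseDisjoint_ball (h : Doubling μ Cd) {x : X} {R r : ℝ} (hr : 0 < r)
    {u : Set X} (hu : u ⊆ ball x R) (hdisj : u.PairwiseDisjoint fun y => ball y r) :
    u.Finite := by
  rcases le_or_gt R 0 with hR | hR
  · rw [ball_eq_empty.2 hR, subset_empty_iff] at hu
    exact hu ▸ finite_empty
  obtain ⟨k, hk⟩ := pow_unbounded_of_one_lt ((2 * R) / r) one_lt_two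
  rw [div_lt_iff₀ hr] at hk
  have hlarge (y : u) : μ (ball x R) / ENNReal.ofReal Cd ^ k ≤ μ (ball (y : X) r) := by
    refine ENNReal.div_le_of_le_mul' ((measure_mono (ball_subset_ball' ?_)).trans
      (h.measure_ball_two_pow_mul_le (y : X) hr k))
    linarith [mem_ball'.1 (hu y.2)]
  have hunion : (⋃ y : u, ball (y : X) r) ⊆ ball x (R + r) :=
    iUnion_subset fun y => ball_subset_ball' (by linarith [mem_ball.1 (hu y.2)])
  have hfinite := Measure.finite_const_le_meas_of_disjoint_iUnion μ
    (ENNReal.div_pos (h.measure_ball_pos x hR).ne' (by finiteness : ENNReal.ofReal Cd ^ k ≠ ∞))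
    (As := fun y : u => ball (y : X) r) (fun _ => measurableSet_ball)
    (fun y z hyz => hdisj y.2 z.2 (Subtype.coe_injective.ne hyz))
    (measure_ne_top_of_subset hunion (h.measure_ball_lt_top _ _).ne)
  have huniv : {y : u | μ (ball x R) / ENNReal.ofReal Cd ^ k ≤ μ (ball (y : X) r)} = univ :=
    eq_univ_of_forall hlarge
  rw [huniv] at hfinite
  exact finite_coe_iff.1 (finite_univ_iff.1 hfinite)

theorem properSpace [CompleteSpace X] (h : Doubling μ Cd) : ProperSpace X := by
  refine ⟨fun x R => isCompact_iff_totallyBounded_isComplete.2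
    ⟨Metric.totallyBounded_iff.2 fun ε hε => ?_, isClosed_closedBall.isComplete⟩⟩
  obtain ⟨u, hu, hdisj, hcover⟩ :=
    Vitali.exists_disjoint_subfamily_covering_enlargement_closedBall (closedBall x R) id
      (fun _ => ε / 10) (ε / 10) (fun _ _ => le_rfl) 5 (by norm_num)
  refine ⟨u, h.finite_of_pairwiseDisjoint_ball (r := ε / 10) (by positivity)
    (hu.trans (closedBall_subset_ball (lt_add_one R)))
    (hdisj.mono fun y => ball_subset_closedBall), fun y hy => ?_⟩
  obtain ⟨z, hz, hyz⟩ := hcover y hy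
  have hdist : dist y z ≤ 5 * (ε / 10) := hyz (mem_closedBall_self (by positivity))
  exact mem_iUnion₂.2 ⟨z, hz, mem_ball.2 (by linarith)⟩

end Doubling

/-! ### Functions with a local slope bound -/

/-- At scales up to `ε`, the difference quotients of `F` are bounded by the larger of the values of
`h` at the two points. Infima over chains have this property. -/
def LocalSlopeBound (ε : ℝ≥0) (F : X → ℝ) (h : X → ℝ≥0) : Prop :=
  ∀ x y, dist x y ≤ ε → |F x - F y| ≤ max (h x) (h y) * dist x y

section LocalSlopeBound
variable {ε : ℝ≥0} {F : X → ℝ} {h : X → ℝ≥0}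

section
omit [MeasurableSpace X] [BorelSpace X]

theorem localSlopeBound_chainInf (ε : ℝ≥0) (h W : X → ℝ≥0) :
    LocalSlopeBound ε (fun x => chainInf ε h W x) h := fun x y hxy => by
  have hle (x y : X) (hxy : dist x y ≤ ε) :
      (chainInf ε h W x : ℝ) - chainInf ε h W y ≤ h x * dist x y :=
    sub_le_iff_le_add.2 (NNReal.coe_le_coe.2 (chainInf_le_mul_nndist_add h W hxy))
  refine abs_sub_le_iff.2 ⟨(hle x y hxy).trans ?_, (hle y x (dist_comm x y ▸ hxy)).trans ?_⟩
  · gcongr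
    exact_mod_cast le_max_left _ _
  · rw [dist_comm y x]
    gcongr
    exact_mod_cast le_max_right _ _

theorem LocalSlopeBound.locLipOn (hF : LocalSlopeBound ε F h) (hε : 0 < ε) (hh : Continuous h) :
    LocLipOn F univ := by
  intro x _
  obtain ⟨r, hr, hhr⟩ := Metric.eventually_nhds_iff_ball.1
    (hh.continuousAt.eventually_le_const (lt_add_one (h x)))
  refine ⟨min r (ε / 2), by positivity, h x + 1, ?_⟩
  refine LipschitzOnWith.of_dist_le_mul fun y ⟨_, hy⟩ z ⟨_, hz⟩ => ?_
  have hy' := lt_min_iff.1 (mem_ball.1 hy)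
  have hz' := lt_min_iff.1 (mem_ball.1 hz)
  refine (hF y z ((dist_triangle_right y z x).trans (by linarith))).trans ?_
  gcongr
  exact_mod_cast max_le (hhr y hy'.1) (hhr z hz'.1)

theorem LocalSlopeBound.ae_abs_deriv_le (hF : LocalSlopeBound ε F h) (hε : 0 < ε)
    (hh : Continuous h) (γ : Curve X) :
    ∀ᵐ t ∂volume.restrict (Icc 0 γ.len),
      ENNReal.ofReal |deriv (F ∘ γ.toFun) t| ≤ h (γ.toFun t) := by
  rw [← restrict_Ioo_eq_restrict_Icc, ae_restrict_iff' measurableSet_Ioo]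
  refine .of_forall fun t ht => ENNReal.ofReal_le_coe.2 (le_of_forall_pos_le_add fun η hη => ?_)
  have hnhds : Icc 0 γ.len ∈ 𝓝 t := Icc_mem_nhds ht.1 ht.2
  have hcont : ContinuousAt (fun s => (h (γ.toFun s) : ℝ)) t := (NNReal.continuous_coe.comp
    hh).comp_continuousOn γ.lip.continuousOn |>.continuousAt hnhds
  refine norm_deriv_le_of_lip' (f := F ∘ γ.toFun) (x₀ := t) (by positivity) ?_
  filter_upwards [hcont.eventually_le_const (lt_add_of_pos_right _ hη), hnhds,
    ball_mem_nhds t (NNReal.coe_pos.2 hε)] with s hs hsγ hst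
  have hdist : dist (γ.toFun s) (γ.toFun t) ≤ dist s t := by
    simpa only [NNReal.coe_one, one_mul] using γ.lip.dist_le_mul s hsγ t (mem_of_mem_nhds hnhds)
  refine (hF _ _ (hdist.trans (mem_ball.1 hst).le)).trans ?_
  rw [← dist_eq_norm, NNReal.coe_max]
  gcongr
  exact max_le hs (by linarith)

end

theorem LocalSlopeBound.isUpperGradient (hF : LocalSlopeBound ε F h) (hε : 0 < ε)
    (hh : Continuous h) : IsUpperGradient F fun x => h x :=
  ⟨hh.measurable.coe_nnreal_ennreal, fun γ => UGIneq.of_ae_abs_deriv_le (hF.locLipOn hε hh)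
    (fun _ _ => mem_univ _) (hF.ae_abs_deriv_le hε hh γ)⟩

omit [MeasurableSpace X] [BorelSpace X] in
theorem LocLipOn.continuous (hF : LocLipOn F univ) : Continuous F :=
  continuous_iff_continuousAt.2 fun x => by
    obtain ⟨r, hr, K, hK⟩ := hF x (mem_univ x)
    rw [univ_inter] at hK
    exact hK.continuousOn.continuousAt (ball_mem_nhds x hr)

end LocalSlopeBound

/-! ### Averages and the Poincaré inequality -/

theorem abs_setAverage_sub_le {α : Type*} [MeasurableSpace α] {ν : Measure α} {f : α → ℝ}
    {s t : Set α} {D : ℝ} (hf : IntegrableOn f t ν) (hst : s ⊆ t) (hs : 0 < ν.real s)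
    (ht : ν t ≠ ∞) (hD : ν.real t ≤ D * ν.real s) (c : ℝ) :
    |(⨍ y in s, f y ∂ν) - c| ≤ D * ⨍ y in t, |f y - c| ∂ν := by
  have htpos : 0 < ν.real t := hs.trans_le (measureReal_mono hst ht)
  have hconst : IntegrableOn (fun _ => c) t ν := integrableOn_const ht
  have hsub : (⨍ y in s, f y ∂ν) - c = (ν.real s)⁻¹ * ∫ y in s, (f y - c) ∂ν := by
    rw [integral_sub (hf.mono_set hst) (hconst.mono_set hst), setAverage_eq, setIntegral_const,
      smul_eq_mul, smul_eq_mul, mul_sub, inv_mul_cancel_left₀ hs.ne']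
  rw [hsub, abs_mul, abs_of_pos (inv_pos.2 hs), setAverage_eq, smul_eq_mul, ← mul_assoc]
  refine mul_le_mul ?_ (abs_integral_le_integral_abs.trans ?_) (abs_nonneg _) ?_
  · rwa [← div_eq_mul_inv, inv_eq_one_div, div_le_div_iff₀ hs htpos, one_mul]
  · exact setIntegral_mono_set (hf.sub hconst).abs (.of_forall fun _ => abs_nonneg _)
      hst.eventuallyLE
  · have hD0 : 0 < D := pos_of_mul_pos_left (htpos.trans_le hD) hs.le
    positivity

section
variable [ProperSpace X] {μ : Measure X} [IsLocallyFiniteMeasure μ] {f : X → ℝ}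

theorem integrableOn_ball_of_continuous (hf : Continuous f) (x : X) (r : ℝ) :
    IntegrableOn f (ball x r) μ :=
  (hf.locallyIntegrable.integrableOn_isCompact (isCompact_closedBall x r)).mono_set
    ball_subset_closedBall

theorem memL1Loc_univ_of_continuous (hf : Continuous f) : MemL1Loc μ univ f := by
  refine ⟨hf.measurable.aemeasurable, fun x _ => ⟨1, one_pos, ?_⟩⟩
  rw [univ_inter]
  exact hasFiniteIntegral_iff_norm f |>.1 (integrableOn_ball_of_continuous hf x 1).2

theorem tendsto_setAverage_ball [μ.IsOpenPosMeasure] (hf : Continuous f) (x : X) :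
    Tendsto (fun r => ⨍ y in ball x r, f y ∂μ) (𝓝[>] 0) (𝓝 (f x)) := by
  refine (nhds_basis_closedBall.tendsto_right_iff).2 fun η hη => ?_
  obtain ⟨δ, hδ, hfδ⟩ := Metric.continuous_iff.1 hf x η hη
  filter_upwards [Ioo_mem_nhdsGT hδ] with r hr
  refine (convex_closedBall _ _).set_average_mem isClosed_closedBall
    (measure_ball_pos μ x hr.1).ne' measure_ball_lt_top.ne ?_
    (integrableOn_ball_of_continuous hf x r)
  exact ae_restrict_of_forall_mem measurableSet_ball fun y hy =>
    (hfδ y ((mem_ball.1 hy).trans hr.2)).le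

end

/-- The Hardy-Littlewood maximal function of `h`, restricted to radii at most `R`. -/
def maximalFun (μ : Measure X) (h : X → ℝ≥0∞) (R : ℝ) (x : X) : ℝ≥0∞ :=
  ⨆ s ∈ Ioc 0 R, ⨍⁻ y in ball x s, h y ∂μ

section maximalFun
variable {μ : Measure X} {h : X → ℝ≥0∞} {R : ℝ}

section
omit [BorelSpace X]

theorem setLAverage_ball_le_maximalFun {s : ℝ} (hs : s ∈ Ioc 0 R) (x : X) :
    ⨍⁻ y in ball x s, h y ∂μ ≤ maximalFun μ h R x :=
  le_iSup₂ (f := fun s _ => ⨍⁻ y in ball x s, h y ∂μ) s hs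

theorem maximalFun_mono {R' : ℝ} (hR : R ≤ R') (x : X) :
    maximalFun μ h R x ≤ maximalFun μ h R' x :=
  biSup_mono fun _ hs => Ioc_subset_Ioc_right hR hs

theorem maximalFun_add_const_le (c : ℝ≥0∞) (x : X) :
    maximalFun μ (fun y => h y + c) R x ≤ maximalFun μ h R x + c := by
  refine iSup₂_le fun s hs => ?_
  rw [setLAverage_eq, lintegral_add_right _ measurable_const, setLIntegral_const, ENNReal.add_div,
    ← setLAverage_eq]
  exact add_le_add (setLAverage_ball_le_maximalFun hs x)
    (ENNReal.div_le_of_le_mul le_rfl)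

end

theorem Doubling.ae_exists_maximalFun_lt_top [SecondCountableTopology X] {Cd : ℝ}
    (hd : Doubling μ Cd) (hh : AEMeasurable h μ) (hfin : ∫⁻ x, h x ∂μ ≠ ∞) :
    ∀ᵐ x ∂μ, ∃ R > 0, maximalFun μ h R x < ∞ := by
  have := hd.isUnifLocDoublingMeasure
  have := hd.isLocallyFiniteMeasure
  filter_upwards [(IsUnifLocDoublingMeasure.vitaliFamily μ 1).ae_tendsto_lintegral_div hh hfin,
    ae_lt_top' hh hfin] with x hx hhx
  have hclosedBall : Tendsto (closedBall x) (𝓝[>] 0)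
      ((IsUnifLocDoublingMeasure.vitaliFamily μ 1).filterAt x) :=
    IsUnifLocDoublingMeasure.tendsto_closedBall_filterAt μ (fun _ => x) id tendsto_id <| by
      filter_upwards [self_mem_nhdsWithin] with r hr
      exact mem_closedBall_self (by rw [one_mul]; exact le_of_lt hr)
  have hlt : h x < h x + 1 := ENNReal.lt_add_right hhx.ne one_ne_zero
  have hbound : h x + 1 < ∞ := ENNReal.add_lt_top.2 ⟨hhx, ENNReal.one_lt_top⟩
  obtain ⟨R, hR, hRle⟩ := mem_nhdsGT_iff_exists_Ioc_subset.1
    ((hx.comp hclosedBall).eventually_le_const hlt)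
  refine ⟨R, hR, (iSup₂_le fun s hs => ?_).trans_lt
    (ENNReal.mul_lt_top hbound (ENNReal.ofReal_lt_top (r := Cd)))⟩
  rw [setLAverage_eq]
  refine ENNReal.div_le_of_le_mul ?_
  have hμ : μ (closedBall x s) ≤ ENNReal.ofReal Cd * μ (ball x s) :=
    (measure_mono (closedBall_subset_ball (by linarith [hs.1]))).trans (hd.2 x s hs.1).2.1
  have hμtop : μ (closedBall x s) ≠ ∞ :=
    (hμ.trans_lt (ENNReal.mul_lt_top ENNReal.ofReal_lt_top (hd.measure_ball_lt_top x s))).ne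
  calc ∫⁻ y in ball x s, h y ∂μ ≤ ∫⁻ y in closedBall x s, h y ∂μ :=
        lintegral_mono_set ball_subset_closedBall
    _ ≤ (h x + 1) * μ (closedBall x s) :=
        (ENNReal.div_le_iff_le_mul (.inr hbound.ne) (.inl hμtop)).1 (hRle hs)
    _ ≤ (h x + 1) * ENNReal.ofReal Cd * μ (ball x s) := by
        rw [mul_assoc]
        gcongr

end maximalFun

namespace Poincare
variable [ProperSpace X] {μ : Measure X} {Cd CP lam : ℝ} {f : X → ℝ} {h : X → ℝ≥0∞} {R : ℝ}
  {t : ℝ≥0}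

theorem setAverage_abs_sub_le [IsLocallyFiniteMeasure μ] (hP : Poincare μ CP lam)
    (hf : Continuous f) (hh : IsUpperGradient f h) {x : X} {r : ℝ} (hr : 0 < r) (hrR : lam * r ≤ R)
    (ht : maximalFun μ h R x ≤ t) :
    ⨍ y in ball x r, |f y - ⨍ z in ball x r, f z ∂μ| ∂μ ≤ CP * r * t := by
  have hCP : 0 < CP := one_pos.trans_le hP.1
  have hlam : 0 < lam := one_pos.trans_le hP.2.1
  rw [← ENNReal.ofReal_le_ofReal_iff (by positivity), ENNReal.ofReal_mul (by positivity),
    ENNReal.ofReal_coe_nnreal]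
  refine (hP.2.2 x r hr f h (memL1Loc_univ_of_continuous hf) hh).trans ?_
  rw [← setLAverage_eq]
  gcongr
  exact (setLAverage_ball_le_maximalFun ⟨by positivity, hrR⟩ x).trans ht

theorem abs_setAverage_sub_setAverage_le [IsLocallyFiniteMeasure μ] (hP : Poincare μ CP lam)
    (hf : Continuous f) (hh : IsUpperGradient f h) {x y : X} {r s D : ℝ} (hr : 0 < r)
    (hrR : lam * r ≤ R) (ht : maximalFun μ h R x ≤ t) (hsub : ball y s ⊆ ball x r)
    (hs : 0 < μ.real (ball y s)) (hD : μ.real (ball x r) ≤ D * μ.real (ball y s)) :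
    |(⨍ z in ball y s, f z ∂μ) - ⨍ z in ball x r, f z ∂μ| ≤ D * (CP * r * t) := by
  have hD0 : 0 ≤ D := le_of_mul_le_mul_right
    ((zero_mul _).trans_le (measureReal_nonneg.trans hD)) hs
  exact (abs_setAverage_sub_le (integrableOn_ball_of_continuous hf x r) hsub hs
    measure_ball_lt_top.ne hD _).trans
      (mul_le_mul_of_nonneg_left (hP.setAverage_abs_sub_le hf hh hr hrR ht) hD0)

theorem abs_setAverage_ball_sub_le (hP : Poincare μ CP lam) (hd : Doubling μ Cd)
    (hf : Continuous f) (hh : IsUpperGradient f h) {x : X} {r : ℝ} (hr : 0 < r)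
    (hrR : lam * r ≤ R) (ht : maximalFun μ h R x ≤ t) :
    |(⨍ y in ball x r, f y ∂μ) - f x| ≤ 2 * Cd * CP * r * t := by
  have := hd.isLocallyFiniteMeasure
  have := hd.isOpenPosMeasure
  have hlam : 0 ≤ lam := zero_le_one.trans hP.2.1
  have hrk (k : ℕ) : 0 < r / 2 ^ k := by positivity
  have hradii : Tendsto (fun k : ℕ => r / 2 ^ k) atTop (𝓝[>] 0) :=
    tendsto_nhdsWithin_iff.2 ⟨tendsto_const_nhds.div_atTop
      (tendsto_pow_atTop_atTop_of_one_lt one_lt_two), .of_forall hrk⟩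
  have hlim := (tendsto_setAverage_ball (μ := μ) hf x).comp hradii
  have hstep (k : ℕ) : dist (⨍ y in ball x (r / 2 ^ k), f y ∂μ)
      (⨍ y in ball x (r / 2 ^ (k + 1)), f y ∂μ) ≤ 2 * Cd * CP * r * t / 2 / 2 ^ k := by
    have hhalf : r / 2 ^ k = 2 ^ 1 * (r / 2 ^ (k + 1)) := by
      field_simp
      ring
    have hrk1 := hrk (k + 1)
    have hle : r / 2 ^ k ≤ r := div_le_self hr.le (one_le_pow₀ one_le_two)
    rw [dist_comm, Real.dist_eq]
    refine (hP.abs_setAverage_sub_setAverage_le (D := Cd ^ 1) hf hh (hrk k)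
      ((mul_le_mul_of_nonneg_left hle hlam).trans hrR) ht (ball_subset_ball (by linarith))
      (ENNReal.toReal_pos (measure_ball_pos μ x hrk1).ne' measure_ball_lt_top.ne)
      (hhalf ▸ hd.measureReal_ball_two_pow_mul_le x hrk1 1)).trans_eq ?_
    ring
  simpa only [Function.comp_apply, pow_zero, div_one, Real.dist_eq] using
    dist_le_of_le_geometric_two_of_tendsto₀ hstep hlim

theorem abs_sub_le_of_maximalFun_le (hP : Poincare μ CP lam) (hd : Doubling μ Cd)
    (hf : Continuous f) (hh : IsUpperGradient f h) {x y : X} (hxy : 2 * lam * dist x y ≤ R)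
    (hx : maximalFun μ h R x ≤ t) (hy : maximalFun μ h R y ≤ t) :
    |f x - f y| ≤ (6 * Cd * CP + 2 * Cd ^ 2 * CP) * t * dist x y := by
  have := hd.isLocallyFiniteMeasure
  rcases eq_or_ne x y with rfl | hne
  · simp only [sub_self, abs_zero, dist_self, mul_zero, le_refl]
  have hdist : 0 < dist x y := dist_pos.2 hne
  have hlam : 0 < lam := one_pos.trans_le hP.2.1
  have hlamdist : 0 < lam * dist x y := by positivity
  have hx_avg := hP.abs_setAverage_ball_sub_le hd hf hh (r := 2 * dist x y) (by positivity)
    (by linarith) hx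
  have hy_avg := hP.abs_setAverage_ball_sub_le hd hf hh hdist (by linarith) hy
  have hμ : μ.real (ball x (2 * dist x y)) ≤ Cd ^ 2 * μ.real (ball y (dist x y)) :=
    (measureReal_mono (ball_subset_ball' (by linarith)) measure_ball_lt_top.ne).trans
      (hd.measureReal_ball_two_pow_mul_le y hdist 2)
  have hxy_avg := hP.abs_setAverage_sub_setAverage_le (D := Cd ^ 2) hf hh (by positivity)
    (by linarith) hx (ball_subset_ball' (by linarith [dist_comm x y]))
    (ENNReal.toReal_pos (hd.measure_ball_pos y hdist).ne' measure_ball_lt_top.ne) hμ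
  rw [abs_le] at *
  constructor <;> linarith

end Poincare

/-! ### Measurability of functions with an integrable upper gradient -/

section
omit [MeasurableSpace X] [BorelSpace X]

theorem lipschitzOnWith_of_dist_le {f : X → ℝ} {s : Set X} {K C r : ℝ≥0} (hr : 0 < r)
    (hK : ∀ x ∈ s, ∀ y ∈ s, dist x y ≤ r → dist (f x) (f y) ≤ K * dist x y)
    (hC : ∀ x y, dist (f x) (f y) ≤ C) : LipschitzOnWith (max K (C / r)) f s := by
  refine LipschitzOnWith.of_dist_le_mul fun x hx y hy => ?_
  rcases le_or_gt (dist x y) r with hxy | hxy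
  · refine (hK x hx y hy hxy).trans ?_
    gcongr
    exact le_max_left _ _
  · calc dist (f x) (f y) ≤ C := hC x y
      _ = (C / r : ℝ≥0) * r := by rw [← NNReal.coe_mul, div_mul_cancel₀ _ hr.ne']
      _ ≤ (max K (C / r) : ℝ≥0) * dist x y := by
          gcongr
          exact le_max_right _ _

theorem UGIneq.abs_sub_const {w : X → ℝ} {g : X → ℝ≥0∞} {γ : Curve X} (h : UGIneq w g γ) (c : ℝ) :
    UGIneq (fun z => |w z - c|) g γ := by
  refine (ENNReal.ofReal_le_ofReal ?_).trans h
  simpa only [sub_sub_sub_cancel_right] using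
    abs_abs_sub_abs_le_abs_sub (w (γ.toFun 0) - c) (w (γ.toFun γ.len) - c)

theorem UGIneq.mono {w : X → ℝ} {g g' : X → ℝ≥0∞} {γ : Curve X} (h : UGIneq w g γ)
    (hg : ∀ x, g x ≤ g' x) : UGIneq w g' γ :=
  h.trans (lintegral_mono fun _ => hg _)

theorem ofReal_abs_sub_le_iSup_mul_nndist {w : X → ℝ} {C : ℝ≥0} (hw : ∀ x y, dist (w x) (w y) ≤ C)
    (x z : X) : ENNReal.ofReal |w z - w x| ≤ ⨆ n : ℕ, ((n * nndist x z : ℝ≥0) : ℝ≥0∞) := by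
  rcases eq_or_ne x z with rfl | hne
  · simp only [sub_self, abs_zero, ENNReal.ofReal_zero, zero_le]
  obtain ⟨n, hn⟩ := exists_nat_ge (C / dist x z)
  rw [div_le_iff₀ (dist_pos.2 hne)] at hn
  exact le_iSup_of_le n (ENNReal.ofReal_le_coe.2 ((hw z x).trans hn))

end

/- Take for `F` the infimum over chains with final cost `n * dist x`: as `n → ∞` these costs become
infinite away from `x`. -/
theorem exists_continuous_isUpperGradient_of_lt [ProperSpace X] {w : X → ℝ} {C : ℝ≥0}
    {h : X → ℝ≥0∞} (hw : ∀ x y, dist (w x) (w y) ≤ C) (hh : LowerSemicontinuous h)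
    (hCh : ∀ x, C ≤ h x) (hwh : IsUpperGradient w h) {x y : X} {a : ℝ≥0} (ha : a < |w y - w x|) :
    ∃ F : X → ℝ, Continuous F ∧ IsUpperGradient F h ∧ F x = 0 ∧ a < F y := by
  have hiSup := iSup_lipApprox hh
  obtain ⟨n, hn⟩ := exists_lt_chainInf (h := lipApprox h) (W := fun n z => n * nndist x z)
    (ε := fun n => 1 / ((n : ℝ≥0) + 1)) (w := fun z => |w z - w x|)
    (fun n => (lipschitzWith_lipApprox h n).uniformContinuous) (monotone_lipApprox h)
    (fun n => by fun_prop) (fun m n hmn z => by dsimp only; gcongr)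
    tendsto_one_div_add_atTop_nhds_zero_nat
    (ofReal_abs_sub_le_iSup_mul_nndist hw x)
    (fun z => by rw [hiSup]; exact (ENNReal.ofReal_le_coe.2 (hw z x)).trans (hCh z))
    (fun γ => by simpa only [hiSup] using (hwh.2 γ).abs_sub_const (w x)) ha
  have hF := localSlopeBound_chainInf (1 / ((n : ℝ≥0) + 1)) (lipApprox h n) fun z => n * nndist x z
  have hcont : Continuous (lipApprox h n) := (lipschitzWith_lipApprox h n).continuous
  refine ⟨_, (hF.locLipOn (by positivity) hcont).continuous, ⟨hh.measurable, fun γ =>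
    ((hF.isUpperGradient (by positivity) hcont).2 γ).mono fun z => ?_⟩, ?_, hn⟩
  · exact (le_iSup (fun n => (lipApprox h n z : ℝ≥0∞)) n).trans_eq (hiSup z)
  · simpa only [nndist_self, mul_zero, nonpos_iff_eq_zero, NNReal.coe_eq_zero] using
      chainInf_le (1 / ((n : ℝ≥0) + 1)) (lipApprox h n) (fun z => n * nndist x z) x

section
variable [ProperSpace X] {μ : Measure X} {Cd CP lam : ℝ} {w : X → ℝ} {C : ℝ≥0}

theorem Poincare.abs_sub_le_of_lowerSemicontinuous (hP : Poincare μ CP lam) (hd : Doubling μ Cd)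
    {h : X → ℝ≥0∞} (hw : ∀ x y, dist (w x) (w y) ≤ C) (hh : LowerSemicontinuous h)
    (hCh : ∀ x, C ≤ h x) (hwh : IsUpperGradient w h) {x y : X} {R : ℝ} {t : ℝ≥0}
    (hxy : 2 * lam * dist x y ≤ R) (hx : maximalFun μ h R x ≤ t) (hy : maximalFun μ h R y ≤ t) :
    |w x - w y| ≤ (6 * Cd * CP + 2 * Cd ^ 2 * CP) * t * dist x y := by
  rw [abs_sub_comm]
  refine le_of_forall_lt_imp_le_of_dense fun a ha => ?_
  rcases lt_or_ge a 0 with ha0 | ha0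
  · have hCd : 0 ≤ Cd := zero_le_one.trans hd.1
    have hCP : 0 ≤ CP := zero_le_one.trans hP.1
    exact ha0.le.trans (by positivity)
  lift a to ℝ≥0 using ha0
  obtain ⟨F, hFc, hFh, hFx, hFy⟩ := exists_continuous_isUpperGradient_of_lt hw hh hCh hwh ha
  calc (a : ℝ) ≤ |F x - F y| := by
        rw [hFx, zero_sub, abs_neg]
        exact hFy.le.trans (le_abs_self _)
    _ ≤ _ := hP.abs_sub_le_of_maximalFun_le hd hFc hFh hxy hx hy

theorem Poincare.exists_lipschitzOnWith_setOf_maximalFun_le (hP : Poincare μ CP lam)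
    (hd : Doubling μ Cd) {h : X → ℝ≥0∞} (hw : ∀ x y, dist (w x) (w y) ≤ C)
    (hh : LowerSemicontinuous h) (hCh : ∀ x, C ≤ h x) (hwh : IsUpperGradient w h) {R : ℝ}
    (hR : 0 < R) (t : ℝ≥0) : ∃ K, LipschitzOnWith K w {x | maximalFun μ h R x ≤ t} := by
  have hCd : 0 ≤ Cd := zero_le_one.trans hd.1
  have hCP : 0 ≤ CP := zero_le_one.trans hP.1
  have hlam : 0 < lam := one_pos.trans_le hP.2.1
  have hr : 0 < R / (2 * lam) := by positivity
  lift R / (2 * lam) to ℝ≥0 using hr.le with r hr_eq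
  lift (6 * Cd * CP + 2 * Cd ^ 2 * CP) * t to ℝ≥0 using by positivity with K hK
  refine ⟨_, lipschitzOnWith_of_dist_le (K := K) (r := r) (by exact_mod_cast hr)
    (fun x hx y hy hxy => ?_) hw⟩
  rw [hK]
  refine hP.abs_sub_le_of_lowerSemicontinuous hd hw hh hCh hwh ?_ hx hy
  rwa [hr_eq, le_div_iff₀ (by positivity), mul_comm] at hxy

theorem Doubling.ae_eventually_maximalFun_le {h : X → ℝ≥0∞} (hd : Doubling μ Cd)
    (hh : AEMeasurable h μ) (hfin : ∫⁻ x, h x ∂μ ≠ ∞) (C : ℝ≥0) :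
    ∀ᵐ x ∂μ, ∀ᶠ k : ℕ in atTop, maximalFun μ (fun y => h y + C) (1 / (k + 1)) x ≤ (k : ℝ≥0) := by
  filter_upwards [hd.ae_exists_maximalFun_lt_top hh hfin] with x ⟨R, hR, hx⟩
  have hlt : maximalFun μ (fun y => h y + C) R x < ∞ :=
    (maximalFun_add_const_le _ x).trans_lt (ENNReal.add_lt_top.2 ⟨hx, ENNReal.coe_lt_top⟩)
  filter_upwards [ENNReal.tendsto_nat_nhds_top.eventually_const_le hlt,
    tendsto_one_div_add_atTop_nhds_zero_nat.eventually_le_const hR] with k hk hkR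
  exact (maximalFun_mono hkR x).trans hk

/- By the Poincaré inequality `w` is Lipschitz on sets where a maximal function is bounded, and
these sets exhaust almost all of the space. -/
theorem IsUpperGradient.aemeasurable {g : X → ℝ≥0∞} (hg : IsUpperGradient w g)
    (hd : Doubling μ Cd) (hP : Poincare μ CP lam) (hw : ∀ x y, dist (w x) (w y) ≤ C)
    (hfin : ∫⁻ x, g x ∂μ ≠ ∞) : AEMeasurable w μ := by
  have := hd.isLocallyFiniteMeasure
  obtain ⟨g₁, hgg₁, hg₁, hg₁_int⟩ := exists_le_lowerSemicontinuous_lintegral_ge μ g hg.1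
    (ε := 1) one_ne_zero
  have hg₁_fin : ∫⁻ x, g₁ x ∂μ ≠ ∞ :=
    ne_top_of_le_ne_top (ENNReal.add_ne_top.2 ⟨hfin, ENNReal.one_ne_top⟩) hg₁_int
  have hlsc : LowerSemicontinuous fun x => g₁ x + C := hg₁.add lowerSemicontinuous_const
  have hug : IsUpperGradient w fun x => g₁ x + C :=
    ⟨hlsc.measurable, fun γ => (hg.2 γ).mono fun x => (hgg₁ x).trans le_self_add⟩
  choose K hK using fun k : ℕ => hP.exists_lipschitzOnWith_setOf_maximalFun_le hd hw hlsc
    (fun _ => le_add_self) hug (R := 1 / (k + 1)) (by positivity) k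
  choose v hv hvw using fun k => (hK k).extend_real
  refine aemeasurable_of_tendsto_metrizable_ae (f := v) atTop
    (fun k => (hv k).continuous.measurable.aemeasurable) ?_
  filter_upwards [hd.ae_eventually_maximalFun_le hg₁.measurable.aemeasurable hg₁_fin C] with x hx
  exact tendsto_const_nhds.congr' (hx.mono fun k hk => hvw k hk)

end

/-! ### Capacitary cutoff functions -/

theorem exists_measurable_ge_lintegral_eq {α : Type*} {_ : MeasurableSpace α} {μ : Measure α}
    {f : α → ℝ≥0∞} (hf : AEMeasurable f μ) :
    ∃ F, Measurable F ∧ (∀ x, f x ≤ F x) ∧ ∫⁻ x, F x ∂μ = ∫⁻ x, f x ∂μ := by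
  let N := toMeasurable μ {x | f x ≠ hf.mk f x}
  have N_null : μ N = 0 := (measure_toMeasurable _).trans hf.ae_eq_mk
  have hN : Measurable (N.indicator fun _ => (∞ : ℝ≥0∞)) :=
    measurable_const.indicator (measurableSet_toMeasurable _ _)
  refine ⟨fun x => hf.mk f x + N.indicator (fun _ => ∞) x, hf.measurable_mk.add hN,
    fun x => ?_, ?_⟩
  · by_cases hx : x ∈ N
    · simp only [indicator_of_mem hx, add_top, le_top]
    · have heq : f x = hf.mk f x := not_not.1 fun hne => hx (subset_toMeasurable _ _ hne)
      exact heq.le.trans le_self_add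
  · rw [lintegral_add_right _ hN, lintegral_indicator (measurableSet_toMeasurable _ _),
      setLIntegral_const, N_null, mul_zero, add_zero]
    exact (lintegral_congr_ae hf.ae_eq_mk).symm

section
variable {μ : Measure X}

theorem exists_lowerSemicontinuous_ge_lintegral_le [μ.WeaklyRegular]
    {f : X → ℝ≥0∞} (hf : AEMeasurable f μ) {ε : ℝ≥0∞} (hε : ε ≠ 0) :
    ∃ F, (∀ x, f x ≤ F x) ∧ LowerSemicontinuous F ∧ ∫⁻ x, F x ∂μ ≤ ∫⁻ x, f x ∂μ + ε := by
  obtain ⟨f', hf', hff', h_int⟩ := exists_measurable_ge_lintegral_eq hf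
  obtain ⟨F, hf'F, hF, hle⟩ := exists_le_lowerSemicontinuous_lintegral_ge μ f' hf' hε
  exact ⟨F, fun x => (hff' x).trans (hf'F x), hF, h_int ▸ hle⟩

theorem IsWeakUpperGradientOn.exists_isUpperGradient [μ.WeaklyRegular]
    {u : X → ℝ} {g : X → ℝ≥0∞} (h : IsWeakUpperGradientOn μ u g univ) {η : ℝ≥0∞} (hη : η ≠ 0) :
    ∃ G, LowerSemicontinuous G ∧ IsUpperGradient u G ∧ ∫⁻ x, G x ∂μ ≤ ∫⁻ x, g x ∂μ + η := by
  obtain ⟨hg, ρ, hρ, hρ_fin, hρ_top⟩ := h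
  have hη2 : η / 2 ≠ 0 := (ENNReal.half_pos hη).ne'
  obtain ⟨c, hc, hcρ⟩ := ENNReal.exists_nnreal_pos_mul_lt hρ_fin.ne hη2
  obtain ⟨G, hgG, hG, hle⟩ :=
    exists_lowerSemicontinuous_ge_lintegral_le (hg.add (hρ.const_mul (c : ℝ≥0∞)).aemeasurable) hη2
  refine ⟨G, hG, ⟨hG.measurable, fun γ => ?_⟩, ?_⟩
  · by_cases hγ : UGIneq u g γ
    · exact hγ.mono fun x => le_self_add.trans (hgG x)
    · have top_le : ∞ ≤ γ.integral G := calc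
        ∞ = c * γ.integral ρ := by
          rw [hρ_top γ ⟨fun _ _ => mem_univ _, hγ⟩, ENNReal.mul_top (ENNReal.coe_ne_zero.2 hc.ne')]
        _ = γ.integral fun x => c * ρ x := (lintegral_const_mul' _ _ ENNReal.coe_ne_top).symm
        _ ≤ γ.integral G := lintegral_mono fun t => le_add_self.trans (hgG _)
      exact le_top.trans top_le
  · calc ∫⁻ x, G x ∂μ ≤ ∫⁻ x, g x + c * ρ x ∂μ + η / 2 := hle
      _ = ∫⁻ x, g x ∂μ + c * ∫⁻ x, ρ x ∂μ + η / 2 := by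
          rw [lintegral_add_right _ (hρ.const_mul _), lintegral_const_mul _ hρ]
      _ ≤ ∫⁻ x, g x ∂μ + η / 2 + η / 2 := by gcongr
      _ = ∫⁻ x, g x ∂μ + η := by rw [add_assoc, ENNReal.add_halves]

omit [MeasurableSpace X] [BorelSpace X] in
theorem UGIneq.min_abs {u : X → ℝ} {g : X → ℝ≥0∞} {γ : Curve X} (h : UGIneq u g γ) (c : ℝ) :
    UGIneq (fun x => min |u x| c) g γ := by
  refine (ENNReal.ofReal_le_ofReal ?_).trans h
  refine (abs_min_sub_min_le_max _ _ _ _).trans (max_le (abs_abs_sub_abs_le_abs_sub _ _) ?_)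
  rw [sub_self, abs_zero]
  exact abs_nonneg _

omit [BorelSpace X] in
theorem exists_isWeakUpperGradientOn_of_capa1_lt {A : Set X} {δ : ℝ≥0∞} (hA : capa1 μ A < δ) :
    ∃ u g, IsWeakUpperGradientOn μ u g univ ∧ (∀ x ∈ A, 1 ≤ u x) ∧
      ∫⁻ x, ENNReal.ofReal |u x| ∂μ + ∫⁻ x, g x ∂μ < δ := by
  simp only [capa1, iInf_lt_iff] at hA
  obtain ⟨u, -, huA, hu⟩ := hA
  rw [NNorm, Measure.restrict_univ, ← lt_tsub_iff_left] at hu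
  simp only [iInf_lt_iff] at hu
  obtain ⟨g, hg, hlt⟩ := hu
  exact ⟨u, g, hg, huA, lt_tsub_iff_left.1 hlt⟩

theorem exists_lowerSemicontinuous_of_capa1_lt [ProperSpace X] [IsLocallyFiniteMeasure μ]
    {Cd CP lam : ℝ} (hd : Doubling μ Cd) (hP : Poincare μ CP lam) {A : Set X} {δ : ℝ≥0∞}
    (hA : capa1 μ A < δ) :
    ∃ (w : X → ℝ) (W G : X → ℝ≥0∞), (∀ x ∈ A, 1 ≤ w x) ∧ (∀ x, ENNReal.ofReal (w x) ≤ W x) ∧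
      LowerSemicontinuous W ∧ LowerSemicontinuous G ∧ IsUpperGradient w G ∧
      ∫⁻ x, W x + G x ∂μ < δ := by
  obtain ⟨u, g, hg, huA, hlt⟩ := exists_isWeakUpperGradientOn_of_capa1_lt hA
  obtain ⟨r, hr, hrδ⟩ := ENNReal.lt_iff_exists_add_pos_lt.1 hlt
  have hr2 : (r : ℝ≥0∞) / 2 ≠ 0 := (ENNReal.half_pos (ENNReal.coe_ne_zero.2 hr.ne')).ne'
  obtain ⟨G, hG, hGu, hGle⟩ := hg.exists_isUpperGradient hr2
  let w : X → ℝ := fun x => min |u x| 1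
  have hGw : IsUpperGradient w G := ⟨hG.measurable, fun γ => (hGu.2 γ).min_abs 1⟩
  have w_bdd : ∀ x y, dist (w x) (w y) ≤ (1 : ℝ≥0) := fun x y =>
    Real.dist_le_of_mem_Icc_01 ⟨by positivity, min_le_right _ _⟩ ⟨by positivity, min_le_right _ _⟩
  have total : ∫⁻ x, ENNReal.ofReal |u x| ∂μ + r / 2 + (∫⁻ x, g x ∂μ + r / 2) < δ := by
    rwa [add_add_add_comm, ENNReal.add_halves]
  have G_fin : ∫⁻ x, G x ∂μ ≠ ∞ :=
    ne_top_of_lt (hGle.trans_lt (le_add_self.trans_lt total))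
  obtain ⟨W, hwW, hW, hWle⟩ := exists_lowerSemicontinuous_ge_lintegral_le
    (hGw.aemeasurable hd hP w_bdd G_fin).ennreal_ofReal hr2
  refine ⟨w, W, G, fun x hx => le_min ((huA x hx).trans (le_abs_self _)) le_rfl, hwW, hW, hG, hGw,
    ?_⟩
  calc ∫⁻ x, W x + G x ∂μ = ∫⁻ x, W x ∂μ + ∫⁻ x, G x ∂μ := lintegral_add_left hW.measurable _
    _ ≤ ∫⁻ x, ENNReal.ofReal (w x) ∂μ + r / 2 + (∫⁻ x, g x ∂μ + r / 2) := add_le_add hWle hGle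
    _ ≤ ∫⁻ x, ENNReal.ofReal |u x| ∂μ + r / 2 + (∫⁻ x, g x ∂μ + r / 2) := by
        gcongr
        exact min_le_left _ _
    _ < δ := total

end

/-- Locally Lipschitz substitutes `φ n` for a capacitary test function of the set `A`: they increase
with `n`, every point of `A` eventually lies in the open set `{φ n > 1 / 2}`, and a single function
`h` dominates all `φ n` and their derivatives along all curves. -/
structure IsCutoffSequence (A : Set X) (h : X → ℝ≥0∞) (φ : ℕ → X → ℝ≥0) : Prop where
  measurable : Measurable h
  locLipOn : ∀ n, LocLipOn (fun x => (φ n x : ℝ)) univ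
  monotone : Monotone φ
  le : ∀ n x, φ n x ≤ h x
  deriv_le : ∀ n (γ : Curve X), ∀ᵐ t ∂volume.restrict (Icc 0 γ.len),
    ENNReal.ofReal |deriv ((fun x => (φ n x : ℝ)) ∘ γ.toFun) t| ≤ h (γ.toFun t)
  exists_half_lt : ∀ x ∈ A, ∃ n, 1 / 2 < φ n x

theorem exists_isCutoffSequence [ProperSpace X] {μ : Measure X} [IsLocallyFiniteMeasure μ]
    {Cd CP lam : ℝ} (hd : Doubling μ Cd) (hP : Poincare μ CP lam) {A : Set X} {δ : ℝ≥0∞}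
    (hA : capa1 μ A < δ) : ∃ h φ, IsCutoffSequence A h φ ∧ ∫⁻ x, h x ∂μ < δ := by
  obtain ⟨w, W, G, hwA, hwW, hW, hG, hGw, hlt⟩ := exists_lowerSemicontinuous_of_capa1_lt hd hP hA
  let h : X → ℝ≥0∞ := fun x => W x + G x
  have hh : LowerSemicontinuous h := hW.add hG
  have lip := fun n => lipschitzWith_lipApprox h n
  have hε : ∀ n : ℕ, 0 < 1 / ((n : ℝ≥0) + 1) := fun n => by positivity
  have slope := fun n : ℕ =>
    localSlopeBound_chainInf (1 / ((n : ℝ≥0) + 1)) (lipApprox h n) (lipApprox W n)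
  refine ⟨h, fun n => chainInf (1 / ((n : ℝ≥0) + 1)) (lipApprox h n) (lipApprox W n),
    ⟨hh.measurable, fun n => (slope n).locLipOn (hε n) (lip n).continuous, fun m n hmn => ?_,
    fun n x => ?_, fun n γ => ?_, fun x hx => ?_⟩, hlt⟩
  · refine chainInf_mono (monotone_lipApprox h hmn) (monotone_lipApprox W hmn) ?_
    gcongr
  · calc (chainInf (1 / ((n : ℝ≥0) + 1)) (lipApprox h n) (lipApprox W n) x : ℝ≥0∞)
        ≤ lipApprox W n x := ENNReal.coe_le_coe.2 (chainInf_le _ _ _ _)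
      _ ≤ W x := (le_iSup (fun n => (lipApprox W n x : ℝ≥0∞)) n).trans_eq (iSup_lipApprox hW x)
      _ ≤ h x := le_self_add
  · filter_upwards [(slope n).ae_abs_deriv_le (hε n) (lip n).continuous γ] with t ht
    exact ht.trans ((le_iSup (fun n => (lipApprox h n _ : ℝ≥0∞)) n).trans_eq (iSup_lipApprox hh _))
  · refine exists_lt_chainInf (w := w) (fun n => (lip n).uniformContinuous) (monotone_lipApprox h)
      (fun n => (lipschitzWith_lipApprox W n).continuous) (monotone_lipApprox W)
      tendsto_one_div_add_atTop_nhds_zero_nat (fun z => ?_) (fun z => ?_) (fun γ => ?_) ?_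
    · exact (hwW z).trans_eq (iSup_lipApprox hW z).symm
    · exact ((hwW z).trans le_self_add).trans_eq (iSup_lipApprox hh z).symm
    · simp only [iSup_lipApprox hh]
      exact (hGw.2 γ).mono fun _ => le_add_self
    · exact lt_of_lt_of_le (by norm_num) (hwA x hx)

/-! ### Truncation at a variable height -/

/-- The truncation of `a` to the interval `[-p, p]`. -/
def clamp (p a : ℝ) : ℝ :=
  max (-p) (min a p)

theorem abs_clamp_sub_clamp_le (p q a b : ℝ) : |clamp p a - clamp q b| ≤ max |a - b| |p - q| := by
  refine (abs_max_sub_max_le_max _ _ _ _).trans (max_le ?_ (abs_min_sub_min_le_max _ _ _ _))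
  rw [neg_sub_neg, abs_sub_comm]
  exact le_max_right _ _

theorem clamp_of_abs_le {p a : ℝ} (h : |a| ≤ p) : clamp p a = a := by
  rw [clamp, min_eq_left (abs_le.1 h).2, max_eq_right (abs_le.1 h).1]

theorem abs_clamp_le {p : ℝ} (hp : 0 ≤ p) (a : ℝ) : |clamp p a| ≤ p :=
  abs_le.2 ⟨le_max_left _ _, max_le (by linarith) (min_le_right _ _)⟩

theorem abs_clamp_sub_self_le {p : ℝ} (hp : 0 ≤ p) (a : ℝ) : |clamp p a - a| ≤ |a| := by
  rcases le_total |a| p with h | h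
  · rw [clamp_of_abs_le h, sub_self, abs_zero]
    exact abs_nonneg a
  · calc |clamp p a - a| = |clamp p a - clamp |a| a| := by rw [clamp_of_abs_le le_rfl]
      _ ≤ max |a - a| |p - (|a|)| := abs_clamp_sub_clamp_le _ _ _ _
      _ = |a| - p := by
          rw [sub_self, abs_zero, max_eq_right (abs_nonneg _), abs_sub_comm,
            abs_of_nonneg (sub_nonneg.2 h)]
      _ ≤ |a| := sub_le_self _ hp

theorem abs_deriv_le_max_of_abs_sub_le {f v p : ℝ → ℝ} {t : ℝ} (hv : DifferentiableAt ℝ v t)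
    (hp : DifferentiableAt ℝ p t) (h : ∀ s, |f s - f t| ≤ max |v s - v t| |p s - p t|) :
    |deriv f t| ≤ max |deriv v t| |deriv p t| := by
  by_cases hf : DifferentiableAt ℝ f t
  · refine le_of_tendsto_of_tendsto' hf.hasDerivAt.tendsto_slope.abs
      (hv.hasDerivAt.tendsto_slope.abs.max hp.hasDerivAt.tendsto_slope.abs) fun s => ?_
    simp only [slope_def_field, abs_div, max_div_div_right (abs_nonneg (s - t))]
    exact div_le_div_of_nonneg_right (h s) (abs_nonneg _)
  · rw [deriv_zero_of_not_differentiableAt hf, abs_zero]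
    positivity

section
omit [MeasurableSpace X] [BorelSpace X]
variable {v p : X → ℝ} {Ω : Set X}

theorem LocLipOn.clamp (hp : LocLipOn p Ω) (hv : LocLipOn v Ω) :
    LocLipOn (fun x => clamp (p x) (v x)) Ω := fun x hx => by
  obtain ⟨r, hr, K, hK⟩ := hp x hx
  obtain ⟨s, hs, L, hL⟩ := hv x hx
  refine ⟨min r s, lt_min hr hs, max L K, .of_dist_le_mul fun y hy z hz => ?_⟩
  have hr_le : Ω ∩ ball x (min r s) ⊆ Ω ∩ ball x r := by gcongr; exact min_le_left _ _
  have hs_le : Ω ∩ ball x (min r s) ⊆ Ω ∩ ball x s := by gcongr; exact min_le_right _ _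
  calc dist (PaperBV.clamp (p y) (v y)) (PaperBV.clamp (p z) (v z))
      ≤ max (dist (v y) (v z)) (dist (p y) (p z)) := abs_clamp_sub_clamp_le _ _ _ _
    _ ≤ max (L * dist y z) (K * dist y z) := max_le_max
        (hL.dist_le_mul y (hs_le hy) z (hs_le hz)) (hK.dist_le_mul y (hr_le hy) z (hr_le hz))
    _ = (max L K : ℝ≥0) * dist y z := by rw [NNReal.coe_max, max_mul_of_nonneg _ _ dist_nonneg]

theorem LocLipOn.lipschitzWith_comp {ψ : ℝ → ℝ} {C : ℝ≥0} (hψ : LipschitzWith C ψ)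
    (hv : LocLipOn v Ω) : LocLipOn (ψ ∘ v) Ω := fun x hx =>
  let ⟨r, hr, K, hK⟩ := hv x hx
  ⟨r, hr, C * K, hψ.comp_lipschitzOnWith hK⟩

theorem LocLipOn.ae_differentiableAt_comp (hv : LocLipOn v Ω) {γ : Curve X} (hγ : γ.In Ω) :
    ∀ᵐ t ∂volume.restrict (Icc 0 γ.len), DifferentiableAt ℝ (v ∘ γ.toFun) t := by
  obtain ⟨K, hK⟩ := hv.exists_lipschitzOnWith_comp hγ
  rw [← restrict_Ioo_eq_restrict_Icc, ae_restrict_iff' measurableSet_Ioo]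
  filter_upwards [hK.ae_differentiableWithinAt_of_mem] with t ht ht_mem
  exact (ht (Ioo_subset_Icc_self ht_mem)).differentiableAt (Icc_mem_nhds ht_mem.1 ht_mem.2)

end

section
variable {μ : Measure X} {v p : X → ℝ} {g h : X → ℝ≥0∞} {Ω : Set X}

theorem DerivBoundOn.lipschitzWith_comp (hvg : DerivBoundOn μ v g Ω) (hv : LocLipOn v Ω)
    {ψ : ℝ → ℝ} {C : ℝ≥0} (hψ : LipschitzWith C ψ) :
    DerivBoundOn μ (ψ ∘ v) (fun x => C * g x) Ω := by
  filter_upwards [hvg] with γ hγg hγ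
  filter_upwards [hγg hγ, hv.ae_differentiableAt_comp hγ] with t hg hdiff
  have deriv_le : |deriv (ψ ∘ v ∘ γ.toFun) t| ≤ C * |deriv (v ∘ γ.toFun) t| := by
    have := abs_deriv_le_max_of_abs_sub_le (f := ψ ∘ v ∘ γ.toFun) (hdiff.const_mul (C : ℝ))
      (hdiff.const_mul (C : ℝ)) fun s => by
        rw [max_self, ← mul_sub, abs_mul, NNReal.abs_eq]
        exact hψ.dist_le_mul _ _
    rwa [max_self, deriv_const_mul _ hdiff, abs_mul, NNReal.abs_eq] at this
  calc ENNReal.ofReal |deriv (ψ ∘ v ∘ γ.toFun) t|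
      ≤ ENNReal.ofReal (C * |deriv (v ∘ γ.toFun) t|) := ENNReal.ofReal_le_ofReal deriv_le
    _ = C * ENNReal.ofReal |deriv (v ∘ γ.toFun) t| := by
        rw [ENNReal.ofReal_mul C.coe_nonneg, ENNReal.ofReal_coe_nnreal]
    _ ≤ C * g (γ.toFun t) := by gcongr

theorem DerivBoundOn.clamp (hph : DerivBoundOn μ p h Ω) (hvg : DerivBoundOn μ v g Ω)
    (hp : LocLipOn p Ω) (hv : LocLipOn v Ω) (hp_nonneg : ∀ x, 0 ≤ p x) :
    DerivBoundOn μ (fun x => clamp (p x) (v x)) ({x | 0 < p x}.indicator (g ⊔ h)) Ω := by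
  filter_upwards [hvg, hph] with γ hγg hγh hγ
  filter_upwards [hγg hγ, hγh hγ, hv.ae_differentiableAt_comp hγ, hp.ae_differentiableAt_comp hγ]
    with t hg hh hvdiff hpdiff
  rcases (hp_nonneg (γ.toFun t)).eq_or_lt with hzero | hpos
  · have hmin : IsLocalMin (p ∘ γ.toFun) t := .of_forall fun s => hzero.symm.trans_le (hp_nonneg _)
    have deriv_le := abs_deriv_le_of_abs_sub_le_sub (hmin.deriv_eq_zero ▸ hpdiff.hasDerivAt)
      (φ := (fun x => PaperBV.clamp (p x) (v x)) ∘ γ.toFun) <| .of_forall fun s => by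
        have clamp_eq_zero : PaperBV.clamp 0 (v (γ.toFun t)) = 0 :=
          abs_nonpos_iff.1 (abs_clamp_le le_rfl _)
        simpa only [Function.comp_apply, clamp_eq_zero, ← hzero, sub_zero] using
          abs_clamp_le (hp_nonneg _) _
    rw [ENNReal.ofReal_of_nonpos deriv_le]
    exact zero_le
  · rw [indicator_of_mem (by exact hpos)]
    exact (ENNReal.ofReal_le_ofReal (abs_deriv_le_max_of_abs_sub_le hvdiff hpdiff fun s =>
      abs_clamp_sub_clamp_le _ _ _ _)).trans
        (ENNReal.ofReal_mono.map_max.trans_le (max_le_max hg hh))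

theorem lintegral_indicator_sup_add_le {α : Type*} {_ : MeasurableSpace α} {μ : Measure α}
    {g h : α → ℝ≥0∞} (hg : AEMeasurable g μ) {s : Set α} (hs : MeasurableSet s) :
    ∫⁻ x, s.indicator (g ⊔ h) x ∂μ + ∫⁻ x in sᶜ, g x ∂μ ≤ ∫⁻ x, g x ∂μ + ∫⁻ x, h x ∂μ :=
  calc ∫⁻ x, s.indicator (g ⊔ h) x ∂μ + ∫⁻ x in sᶜ, g x ∂μ
      ≤ ∫⁻ x in s, g x + h x ∂μ + ∫⁻ x in sᶜ, g x ∂μ := by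
        rw [lintegral_indicator hs]
        gcongr with x
        exact max_le le_self_add le_add_self
    _ = ∫⁻ x, g x ∂μ + ∫⁻ x in s, h x ∂μ := by
        rw [lintegral_add_left' hg.restrict, add_right_comm, lintegral_add_compl g hs]
    _ ≤ ∫⁻ x, g x ∂μ + ∫⁻ x, h x ∂μ := by
        gcongr
        exact Measure.restrict_le_self

end

/-! ### Truncation by capacitary cutoffs -/

/-- The truncation height `M (1 - 2a)₊` associated with the value `a` of a cutoff function: it
vanishes where the cutoff exceeds `1 / 2`. -/
def cutoffHeight (M : ℝ≥0) (a : ℝ) : ℝ :=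
  M * max (1 - 2 * a) 0

theorem cutoffHeight_nonneg (M : ℝ≥0) (a : ℝ) : 0 ≤ cutoffHeight M a := by
  unfold cutoffHeight
  positivity

theorem cutoffHeight_of_half_lt (M : ℝ≥0) {a : ℝ} (ha : 1 / 2 < a) : cutoffHeight M a = 0 := by
  rw [cutoffHeight, max_eq_right (by linarith), mul_zero]

theorem lipschitzWith_cutoffHeight (M : ℝ≥0) : LipschitzWith (2 * M) (cutoffHeight M) := by
  refine .of_dist_le_mul fun a b => ?_
  calc |M * max (1 - 2 * a) 0 - M * max (1 - 2 * b) 0|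
      = M * |max (1 - 2 * a) 0 - max (1 - 2 * b) 0| := by rw [← mul_sub, abs_mul, NNReal.abs_eq]
    _ ≤ M * |(1 - 2 * a) - (1 - 2 * b)| := by gcongr _ * ?_; exact abs_max_sub_max_le_abs _ _ _
    _ = (2 * M : ℝ≥0) * dist a b := by
        rw [Real.dist_eq, abs_sub_comm a b, show (1 - 2 * a) - (1 - 2 * b) = 2 * (b - a) by ring,
          abs_mul, abs_two]
        push_cast
        ring

namespace IsCutoffSequence
variable {μ : Measure X} {A Ω : Set X} {h : X → ℝ≥0∞} {φ : ℕ → X → ℝ≥0}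

section
omit [BorelSpace X]

theorem continuous (hφ : IsCutoffSequence A h φ) (n : ℕ) : Continuous (φ n) :=
  NNReal.isEmbedding_coe.continuous_iff.2 (hφ.locLipOn n).continuous

theorem isOpen_setOf_half_lt (hφ : IsCutoffSequence A h φ) (n : ℕ) : IsOpen {x | 1 / 2 < φ n x} :=
  isOpen_lt continuous_const (hφ.continuous n)

theorem locLipOn_cutoffHeight (hφ : IsCutoffSequence A h φ) (M : ℝ≥0) (n : ℕ) :
    LocLipOn (fun x => cutoffHeight M (φ n x)) Ω :=
  ((hφ.locLipOn n).mono (subset_univ _)).lipschitzWith_comp (ψ := cutoffHeight M)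
    (lipschitzWith_cutoffHeight M)

theorem exists_lt_setLIntegral (hφ : IsCutoffSequence A h φ) {g : X → ℝ≥0∞} {ε : ℝ≥0∞}
    (hε : ε < ∫⁻ x in ⋃ n, Ω ∩ {x | 1 / 2 < φ n x}, g x ∂μ) :
    ∃ n, ε < ∫⁻ x in Ω ∩ {x | 1 / 2 < φ n x}, g x ∂μ := by
  have mono : Monotone fun n => Ω ∩ {x | 1 / 2 < φ n x} := fun m n hmn =>
    inter_subset_inter_right _ fun x (hx : 1 / 2 < φ m x) => hx.trans_le (hφ.monotone hmn x)
  rwa [setLIntegral_iUnion_of_directed _ mono.directed_le, lt_iSup_iff] at hε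

end

theorem derivBoundOn_cutoffHeight (hφ : IsCutoffSequence A h φ) (M : ℝ≥0) (n : ℕ) :
    DerivBoundOn μ (fun x => cutoffHeight M (φ n x)) (fun x => (2 * M : ℝ≥0) * h x) Ω :=
  have derivBound : DerivBoundOn μ (fun x => (φ n x : ℝ)) h Ω :=
    .of_forall fun γ _ => hφ.deriv_le n γ
  derivBound.lipschitzWith_comp (ψ := cutoffHeight M) ((hφ.locLipOn n).mono (subset_univ _))
    (lipschitzWith_cutoffHeight M)

theorem exists_clamp_energy_add_le [SecondCountableTopology X] [SFinite μ]
    (hφ : IsCutoffSequence A h φ) (hΩ : IsOpen Ω) (hA : A ⊆ Ω) {K : Set X} (hK : IsCompact K)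
    (hKΩ : K ⊆ Ω) {w : X → ℝ} {T ε η : ℝ≥0∞} (hT : tvOpen μ Ω w < T) (hε : ε < tv μ A w)
    (hη : 0 < η) (M : ℝ≥0) :
    ∃ n v g, LocLipOn v Ω ∧ ∫⁻ x in K, ENNReal.ofReal |v x - w x| ∂μ < η ∧ AEMeasurable g μ ∧
      DerivBoundOn μ (fun x => clamp (cutoffHeight M (φ n x)) (v x)) g Ω ∧
      ∫⁻ x in Ω, g x ∂μ + ε ≤ T + (2 * M : ℝ≥0) * ∫⁻ x, h x ∂μ := by
  let U : Set X := ⋃ n, Ω ∩ {x | 1 / 2 < φ n x}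
  have hU : IsOpen U := isOpen_iUnion fun n => hΩ.inter (hφ.isOpen_setOf_half_lt n)
  have hAU : A ⊆ U := fun x hx =>
    let ⟨n, hn⟩ := hφ.exists_half_lt x hx
    mem_iUnion.2 ⟨n, hA hx, hn⟩
  have hεU : ε < tvOpen μ U w := hε.trans_le (iInf_le_of_le U (iInf_le_of_le hU (iInf_le _ hAU)))
  obtain ⟨v, g, hv, hg, hvg, hgT, hgU, hvw⟩ := exists_locLipOn_approx_of_tvOpen_lt hΩ hU
    (iUnion_subset fun _ => inter_subset_left) hK hKΩ hT hεU hη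
  obtain ⟨n, hn⟩ := hφ.exists_lt_setLIntegral hgU
  let p : X → ℝ := fun x => cutoffHeight M (φ n x)
  have hp : Continuous p :=
    (lipschitzWith_cutoffHeight M).continuous.comp (hφ.locLipOn n).continuous
  have hpos : MeasurableSet {x | 0 < p x} := (isOpen_lt continuous_const hp).measurableSet
  have hsub : {x | 1 / 2 < φ n x} ⊆ {x | 0 < p x}ᶜ := fun x (hx : 1 / 2 < φ n x) =>
    (cutoffHeight_of_half_lt M (by exact_mod_cast hx)).not_gt
  refine ⟨n, v, _, hv, hvw, (hg.sup (hφ.measurable.const_mul _).aemeasurable).indicator hpos,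
    .clamp (hφ.derivBoundOn_cutoffHeight M n) hvg (hφ.locLipOn_cutoffHeight M n) hv
      fun _ => cutoffHeight_nonneg _ _, ?_⟩
  calc ∫⁻ x in Ω, {x | 0 < p x}.indicator (g ⊔ fun x => (2 * M : ℝ≥0) * h x) x ∂μ + ε
      ≤ ∫⁻ x in Ω, {x | 0 < p x}.indicator (g ⊔ fun x => (2 * M : ℝ≥0) * h x) x ∂μ +
          ∫⁻ x in {x | 0 < p x}ᶜ, g x ∂μ.restrict Ω := by
        gcongr
        rw [Measure.restrict_restrict hpos.compl, inter_comm]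
        exact hn.le.trans (lintegral_mono_set (inter_subset_inter_right _ hsub))
    _ ≤ ∫⁻ x in Ω, g x ∂μ + ∫⁻ x in Ω, (2 * M : ℝ≥0) * h x ∂μ :=
        lintegral_indicator_sup_add_le hg.restrict hpos
    _ ≤ T + (2 * M : ℝ≥0) * ∫⁻ x, h x ∂μ := by
        rw [lintegral_const_mul _ hφ.measurable]
        gcongr
        exact Measure.restrict_le_self

end IsCutoffSequence

/-! ### Convergence of the truncations -/

omit [MeasurableSpace X] [BorelSpace X] in
theorem exists_isCompact_exhaustion [ProperSpace X] {Ω : Set X} (hΩ : IsOpen Ω) :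
    ∃ K : ℕ → Set X, (∀ k, IsCompact (K k)) ∧ (∀ k, K k ⊆ Ω) ∧
      ∀ x ∈ Ω, ∃ r > 0, ∀ᶠ k in atTop, ball x r ⊆ K k := by
  have := hΩ.locallyCompactSpace
  let E := CompactExhaustion.choice Ω
  refine ⟨fun k => (↑) '' E k, fun k => (E.isCompact k).image continuous_subtype_val,
    fun k => Subtype.coe_image_subset _ _, fun x hx => ?_⟩
  obtain ⟨n, hn⟩ := E.exists_mem_nhds ⟨x, hx⟩
  obtain ⟨r, hr, hball⟩ := Metric.mem_nhds_iff.1 (hΩ.isOpenEmbedding_subtypeVal.image_mem_nhds.2 hn)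
  exact ⟨r, hr, eventually_atTop.2 ⟨n, fun k hk => hball.trans (image_mono (E.subset hk))⟩⟩

theorem ae_tendsto_zero_of_tsum_lintegral_ne_top {α : Type*} {_ : MeasurableSpace α}
    {μ : Measure α} {f : ℕ → α → ℝ≥0∞} (hf : ∀ k, AEMeasurable (f k) μ)
    (hsum : ∑' k, ∫⁻ x, f k x ∂μ ≠ ∞) : ∀ᵐ x ∂μ, Tendsto (fun k => f k x) atTop (𝓝 0) := by
  rw [← lintegral_tsum hf] at hsum
  filter_upwards [ae_lt_top' (.tsum hf) hsum] with x hx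
  exact ENNReal.tendsto_atTop_zero_of_tsum_ne_top hx.ne

theorem tendsto_cutoffHeight_atTop {M : ℕ → ℝ≥0} (hM : Tendsto M atTop atTop) {a : ℕ → ℝ}
    (ha : Tendsto a atTop (𝓝 0)) : Tendsto (fun k => cutoffHeight (M k) (a k)) atTop atTop := by
  have hmax : Tendsto (fun k => max (1 - 2 * a k) 0) atTop (𝓝 1) := by
    simpa using ((ha.const_mul 2).const_sub 1).max (tendsto_const_nhds (x := 0))
  exact (NNReal.tendsto_coe_atTop.2 hM).atTop_mul_pos one_pos hmax

section
omit [BorelSpace X]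
variable {μ : Measure X} {Ω : Set X} {u : X → ℝ} {v w : ℕ → X → ℝ}

theorem L1LocConv.of_tendsto_sub (hw : L1LocConv μ Ω w u)
    (hmeas : ∀ k, AEMeasurable (fun x => w k x - u x) (μ.restrict Ω))
    (hvw : ∀ x ∈ Ω, ∃ r > 0, Tendsto (fun k => ∫⁻ y in Ω ∩ ball x r,
      ENNReal.ofReal |v k y - w k y| ∂μ) atTop (𝓝 0)) : L1LocConv μ Ω v u := fun x hx => by
  obtain ⟨r, hr, hr_lim⟩ := hw x hx
  obtain ⟨s, hs, hs_lim⟩ := hvw x hx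
  let B : Set X := Ω ∩ ball x (min r s)
  have B_sub_r : B ⊆ Ω ∩ ball x r := by unfold B; gcongr; exact min_le_left _ _
  have B_sub_s : B ⊆ Ω ∩ ball x s := by unfold B; gcongr; exact min_le_right _ _
  refine ⟨min r s, lt_min hr hs, tendsto_of_tendsto_of_tendsto_of_le_of_le tendsto_const_nhds
    (by simpa only [add_zero] using hs_lim.add hr_lim) (fun _ => zero_le) fun k => ?_⟩
  calc ∫⁻ y in B, ENNReal.ofReal |v k y - u y| ∂μ
      ≤ ∫⁻ y in B, ENNReal.ofReal |v k y - w k y| + ENNReal.ofReal |w k y - u y| ∂μ :=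
        lintegral_mono fun y => (ENNReal.ofReal_le_ofReal (abs_sub_le _ _ _)).trans
          ENNReal.ofReal_add_le
    _ = ∫⁻ y in B, ENNReal.ofReal |v k y - w k y| ∂μ +
          ∫⁻ y in B, ENNReal.ofReal |w k y - u y| ∂μ :=
        lintegral_add_right' _ ((hmeas k).mono_set inter_subset_left).abs.ennreal_ofReal
    _ ≤ ∫⁻ y in Ω ∩ ball x s, ENNReal.ofReal |v k y - w k y| ∂μ +
          ∫⁻ y in Ω ∩ ball x r, ENNReal.ofReal |w k y - u y| ∂μ := by gcongr

theorem L1LocConv.of_tendsto_sub_exhaustion (hw : L1LocConv μ Ω w u)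
    (hmeas : ∀ k, AEMeasurable (fun x => w k x - u x) (μ.restrict Ω)) {K : ℕ → Set X}
    (hK : ∀ x ∈ Ω, ∃ r > 0, ∀ᶠ k in atTop, ball x r ⊆ K k)
    (hvw : Tendsto (fun k => ∫⁻ x in K k, ENNReal.ofReal |v k x - w k x| ∂μ) atTop (𝓝 0)) :
    L1LocConv μ Ω v u :=
  hw.of_tendsto_sub hmeas fun x hx =>
    let ⟨r, hr, hball⟩ := hK x hx
    ⟨r, hr, tendsto_of_tendsto_of_tendsto_of_le_of_le' tendsto_const_nhds hvw
      (.of_forall fun _ => zero_le)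
      (hball.mono fun _ hk => lintegral_mono_set (inter_subset_right.trans hk))⟩

theorem aemeasurable_clamp {α : Type*} {_ : MeasurableSpace α} {ν : Measure α} {p v : α → ℝ}
    (hp : AEMeasurable p ν) (hv : AEMeasurable v ν) :
    AEMeasurable (fun x => clamp (p x) (v x)) ν :=
  hp.neg.max (hv.min hp)

theorem MemL1Loc.l1LocConv_clamp (hu : MemL1Loc μ Ω u) {p : ℕ → X → ℝ}
    (hp : ∀ k, AEMeasurable (p k) (μ.restrict Ω)) (hp_nonneg : ∀ k x, 0 ≤ p k x)
    (hp_lim : ∀ᵐ x ∂μ.restrict Ω, Tendsto (fun k => p k x) atTop atTop) :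
    L1LocConv μ Ω (fun k x => clamp (p k x) (u x)) u := fun x hx => by
  obtain ⟨r, hr, hr_fin⟩ := hu.2 x hx
  have restrict_le : μ.restrict (Ω ∩ ball x r) ≤ μ.restrict Ω :=
    Measure.restrict_mono inter_subset_left le_rfl
  refine ⟨r, hr, ?_⟩
  have := tendsto_lintegral_of_dominated_convergence' (μ := μ.restrict (Ω ∩ ball x r))
    (F := fun k y => ENNReal.ofReal |clamp (p k y) (u y) - u y|) (f := fun _ => 0)
    (fun y => ENNReal.ofReal |u y|) (fun k => ?_)
    (fun k => .of_forall fun y =>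
      ENNReal.ofReal_le_ofReal (abs_clamp_sub_self_le (hp_nonneg k y) _))
    hr_fin.ne ?_
  · simpa only [lintegral_zero] using this
  · exact (((aemeasurable_clamp (hp k) hu.1).sub hu.1).mono_measure restrict_le).abs.ennreal_ofReal
  · filter_upwards [ae_mono restrict_le hp_lim] with y hy
    refine tendsto_const_nhds.congr' ?_
    filter_upwards [hy.eventually_ge_atTop |u y|] with k hk
    rw [clamp_of_abs_le hk, sub_self, abs_zero, ENNReal.ofReal_zero]

theorem L1LocConv.clamp (hv : L1LocConv μ Ω v u) (hu : MemL1Loc μ Ω u) {p : ℕ → X → ℝ}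
    (hp : ∀ k, AEMeasurable (p k) (μ.restrict Ω)) (hp_nonneg : ∀ k x, 0 ≤ p k x)
    (hp_lim : ∀ᵐ x ∂μ.restrict Ω, Tendsto (fun k => p k x) atTop atTop) :
    L1LocConv μ Ω (fun k x => clamp (p k x) (v k x)) u := by
  refine (hu.l1LocConv_clamp hp hp_nonneg hp_lim).of_tendsto_sub
    (fun k => (aemeasurable_clamp (hp k) hu.1).sub hu.1) fun x hx => ?_
  obtain ⟨r, hr, hr_lim⟩ := hv x hx
  refine ⟨r, hr, tendsto_of_tendsto_of_tendsto_of_le_of_le tendsto_const_nhds hr_lim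
    (fun _ => zero_le) fun k => lintegral_mono fun y => ENNReal.ofReal_le_ofReal ?_⟩
  simpa using abs_clamp_sub_clamp_le (p k y) (p k y) (v k y) (u y)

theorem IsCutoffSequence.ae_tendsto_cutoffHeight_atTop {A : ℕ → Set X}
    {h : ℕ → X → ℝ≥0∞} {φ : ℕ → ℕ → X → ℝ≥0} (hφ : ∀ k, IsCutoffSequence (A k) (h k) (φ k))
    (hsum : ∑' k, ∫⁻ x, h k x ∂μ ≠ ∞) {M : ℕ → ℝ≥0} (hM : Tendsto M atTop atTop) (n : ℕ → ℕ) :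
    ∀ᵐ x ∂μ, Tendsto (fun k => cutoffHeight (M k) (φ k (n k) x)) atTop atTop := by
  filter_upwards [ae_tendsto_zero_of_tsum_lintegral_ne_top
    (fun k => (hφ k).measurable.aemeasurable) hsum] with x hx
  have hφ_lim : Tendsto (fun k => φ k (n k) x) atTop (𝓝 0) :=
    ENNReal.tendsto_coe.1 <| tendsto_of_tendsto_of_tendsto_of_le_of_le tendsto_const_nhds hx
      (fun _ => zero_le) fun k => (hφ k).le _ x
  exact tendsto_cutoffHeight_atTop hM (NNReal.tendsto_coe.2 hφ_lim)

end

/-! ### Absolute continuity along sequences -/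

theorem eq_zero_of_add_le_of_le_liminf {a e : ℝ≥0∞} (ha : a ≠ ∞) {x y : ℕ → ℝ≥0∞}
    (hx : a ≤ liminf x atTop) (hy : Tendsto y atTop (𝓝 a)) (hxy : ∀ k, x k + e ≤ y k) : e = 0 := by
  have add_le : a + e ≤ a + 0 := calc
    a + e ≤ liminf x atTop + e := by gcongr
    _ = liminf (fun k => x k + e) atTop :=
        (liminf_add_const _ _ _ (by isBoundedDefault) (by isBoundedDefault)).symm
    _ ≤ liminf y atTop := liminf_le_liminf (.of_forall hxy)
    _ = a + 0 := by rw [hy.liminf_eq, add_zero]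
  exact nonpos_iff_eq_zero.1 ((ENNReal.add_le_add_iff_left ha).1 add_le)

theorem coe_two_mul_two_pow_mul_inv_four_pow (k : ℕ) :
    ((2 * 2 ^ k : ℝ≥0) : ℝ≥0∞) * 4⁻¹ ^ k = 2 * 2⁻¹ ^ k := by
  have four_inv : (4⁻¹ : ℝ≥0∞) = 2⁻¹ * 2⁻¹ := by
    rw [← ENNReal.mul_inv (by simp) (by simp)]
    norm_num
  push_cast
  rw [four_inv, mul_assoc, ← mul_pow, ← mul_assoc, ENNReal.mul_inv_cancel two_ne_zero
    ENNReal.ofNat_ne_top, one_mul]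

section
variable [ProperSpace X] {μ : Measure X} [IsLocallyFiniteMeasure μ] {Cd CP lam : ℝ} {Ω : Set X}
  {u : X → ℝ}

theorem exists_tv_le_of_capa1_lt_pow (hd : Doubling μ Cd) (hP : Poincare μ CP lam) (hΩ : IsOpen Ω)
    (hu : MemL1Loc μ Ω u) (hu_fin : tvOpen μ Ω u < ∞) {w : ℕ → X → ℝ}
    (hw : ∀ k, MemL1Loc μ Ω (w k)) (hwu : L1LocConv μ Ω w u) (hw_fin : ∀ k, tvOpen μ Ω (w k) < ∞)
    (htv : Tendsto (fun k => tvOpen μ Ω (w k)) atTop (𝓝 (tvOpen μ Ω u))) {A : ℕ → Set X}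
    (hA : ∀ k, A k ⊆ Ω) (hcap : ∀ k, capa1 μ (A k) < 4⁻¹ ^ k) {ε : ℝ≥0∞} (hε : ε ≠ 0) :
    ∃ k, tv μ (A k) (w k) ≤ ε := by
  by_contra! hlt
  obtain ⟨K, hK, hKΩ, hK_exh⟩ := exists_isCompact_exhaustion hΩ
  choose h φ hφ hh using fun k => exists_isCutoffSequence hd hP (hcap k)
  have half_pow_pos : ∀ k : ℕ, (0 : ℝ≥0∞) < 2⁻¹ ^ k := fun k => ENNReal.pow_pos (by simp) k
  choose n v g hv hvw hg hclamp hle using fun k =>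
    (hφ k).exists_clamp_energy_add_le hΩ (hA k) (hK k) (hKΩ k)
      (ENNReal.lt_add_right (hw_fin k).ne (half_pow_pos k).ne') (hlt k) (half_pow_pos k) (2 ^ k)
  have pow_lim : Tendsto (fun k : ℕ => (2⁻¹ : ℝ≥0∞) ^ k) atTop (𝓝 0) :=
    ENNReal.tendsto_pow_atTop_nhds_zero_of_lt_one (by simp)
  have v_conv : L1LocConv μ Ω v u := hwu.of_tendsto_sub_exhaustion (fun k => (hw k).1.sub hu.1)
    hK_exh (tendsto_of_tendsto_of_tendsto_of_le_of_le tendsto_const_nhds pow_lim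
      (fun _ => zero_le) fun k => (hvw k).le)
  have h_sum : ∑' k, ∫⁻ x, h k x ∂μ ≠ ∞ := by
    refine ne_top_of_le_ne_top ?_ (ENNReal.tsum_le_tsum fun k => (hh k).le)
    exact (tsum_geometric_lt_top.2 (ENNReal.inv_lt_one.2 (by norm_num))).ne
  have height_lim := IsCutoffSequence.ae_tendsto_cutoffHeight_atTop hφ h_sum
    (tendsto_pow_atTop_atTop_of_one_lt (by norm_num : (1 : ℝ≥0) < 2)) n
  have clamp_conv :
      L1LocConv μ Ω (fun k x => clamp (cutoffHeight (2 ^ k) (φ k (n k) x)) (v k x)) u :=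
    v_conv.clamp hu (fun k => ((hφ k).locLipOn_cutoffHeight _ _).continuous.aemeasurable)
      (fun k x => cutoffHeight_nonneg _ _) (ae_restrict_of_ae height_lim)
  have lsc := tvOpen_le_liminf_of_derivBoundOn hΩ
    (fun k => ((hφ k).locLipOn_cutoffHeight _ _).clamp (hv k)) hg hclamp clamp_conv
  refine hε (eq_zero_of_add_le_of_le_liminf hu_fin.ne lsc (y := fun k =>
    tvOpen μ Ω (w k) + 2⁻¹ ^ k + 2 * 2⁻¹ ^ k) ?_ fun k => (hle k).trans ?_)
  · simpa using (htv.add pow_lim).add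
      (ENNReal.Tendsto.const_mul pow_lim (.inr ENNReal.ofNat_ne_top))
  · rw [← coe_two_mul_two_pow_mul_inv_four_pow]
    gcongr
    exact (hh k).le

theorem exists_pos_eventually_tv_lt (hd : Doubling μ Cd) (hP : Poincare μ CP lam) (hΩ : IsOpen Ω)
    (hu : MemL1Loc μ Ω u) (hu_fin : tvOpen μ Ω u < ∞) {w : ℕ → X → ℝ}
    (hw : ∀ i, MemL1Loc μ Ω (w i)) (hwu : L1LocConv μ Ω w u) (hw_fin : ∀ i, tvOpen μ Ω (w i) < ∞)
    (htv : Tendsto (fun i => tvOpen μ Ω (w i)) atTop (𝓝 (tvOpen μ Ω u))) {ε : ℝ} (hε : 0 < ε) :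
    ∃ δ : ℝ, 0 < δ ∧ ∀ᶠ i in atTop, ∀ A ⊆ Ω, capa1 μ A < ENNReal.ofReal δ →
      tv μ A (w i) < ENNReal.ofReal ε := by
  by_contra! hcon
  have bad : ∀ k : ℕ, ∃ i ≥ k, ∃ A ⊆ Ω, capa1 μ A < 4⁻¹ ^ k ∧ ENNReal.ofReal ε ≤ tv μ A (w i) := by
    intro k
    have := frequently_atTop.1 (hcon (4⁻¹ ^ k) (by positivity)) k
    rwa [ENNReal.ofReal_pow (by norm_num), ENNReal.ofReal_inv_of_pos (by norm_num),
      ENNReal.ofReal_ofNat] at this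
  choose σ hσ A hA hcap hge using bad
  have σ_lim : Tendsto σ atTop atTop := tendsto_atTop_mono hσ tendsto_id
  obtain ⟨k, hk⟩ := exists_tv_le_of_capa1_lt_pow hd hP hΩ hu hu_fin (fun k => hw (σ k))
    (hwu.comp σ_lim) (fun k => hw_fin (σ k)) (htv.comp σ_lim) hA hcap
    (ε := ENNReal.ofReal (ε / 2)) (by simpa using hε)
  have half_lt : ENNReal.ofReal (ε / 2) < ENNReal.ofReal ε :=
    (ENNReal.ofReal_lt_ofReal_iff hε).2 (half_lt_self hε)
  exact (half_lt.trans_le (hge k)).not_ge hk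

end

/-- Uniform absolute continuity with respect to the `1`-capacity:
if `Ω` is open, `u_i → u` in `L¹_loc(Ω)` and `‖Du_i‖(Ω) → ‖Du‖(Ω)` with all these
variations finite, then for every `ε > 0` there is `δ > 0` such that `A ⊆ Ω` and
`capa₁(A) < δ` imply `‖Du_i‖(A) < ε` for all `i`. -/
theorem uniform_absolute_continuity
    (μ : Measure X) (hcomp : CompleteSpace X)
    (hdoub : ∃ Cd : ℝ, Doubling μ Cd) (hpoin : ∃ CP lam : ℝ, Poincare μ CP lam)
    (Ω : Set X) (hΩ : IsOpen Ω) (u : X → ℝ) (ui : ℕ → X → ℝ)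
    (hu : MemL1Loc μ Ω u) (hui : ∀ i, MemL1Loc μ Ω (ui i))
    (hconv : L1LocConv μ Ω ui u)
    (hfin : tvOpen μ Ω u < ∞) (hfini : ∀ i, tvOpen μ Ω (ui i) < ∞)
    (htv : Filter.Tendsto (fun i => tvOpen μ Ω (ui i)) Filter.atTop (𝓝 (tvOpen μ Ω u))) :
    ∀ ε : ℝ, 0 < ε → ∃ δ : ℝ, 0 < δ ∧
      ∀ A : Set X, A ⊆ Ω → capa1 μ A < ENNReal.ofReal δ →
        ∀ i, tv μ A (ui i) < ENNReal.ofReal ε := by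
  intro ε hε
  obtain ⟨Cd, hd⟩ := hdoub
  obtain ⟨CP, lam, hP⟩ := hpoin
  have := hd.properSpace
  have := hd.isLocallyFiniteMeasure
  obtain ⟨δ₀, hδ₀, htail⟩ := exists_pos_eventually_tv_lt hd hP hΩ hu hfin hui hconv hfini htv hε
  obtain ⟨N, hN⟩ := eventually_atTop.1 htail
  have single : ∀ i, ∃ δ : ℝ, 0 < δ ∧ ∀ A ⊆ Ω, capa1 μ A < ENNReal.ofReal δ →
      tv μ A (ui i) < ENNReal.ofReal ε := fun i => by
    simpa only [eventually_const] using exists_pos_eventually_tv_lt hd hP hΩ (hui i) (hfini i)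
      (fun _ => hui i) (fun x _ => ⟨1, one_pos, by simp⟩) (fun _ => hfini i) tendsto_const_nhds hε
  choose δ hδ htv_lt using single
  have small : ∀ᶠ d in 𝓝[>] 0, d ∈ Ioo 0 δ₀ ∧ ∀ i ∈ Iio N, d ∈ Ioo 0 (δ i) :=
    .and (Ioo_mem_nhdsGT hδ₀) <| (eventually_all_finite (finite_Iio N)).2 fun i _ =>
      Ioo_mem_nhdsGT (hδ i)
  obtain ⟨d, hd₀, hd_lt⟩ := small.exists
  refine ⟨d, hd₀.1, fun A hA hcap i => ?_⟩
  rcases lt_or_ge i N with hi | hi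
  · exact htv_lt i A hA (hcap.trans_le (ENNReal.ofReal_le_ofReal (hd_lt i hi).2.le))
  · exact hN i hi A hA (hcap.trans_le (ENNReal.ofReal_le_ofReal hd₀.2.le))

end PaperBV
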